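/- arXiv:2506.20395 — 4 statements merged into one kernel-verified Lean document; each statement's English description precedes it below -/
import Mathlib

section
/- Let K be a field of characteristic 0 and let A be a finite-dimensional ℤ₂-graded associative unital K-algebra which is graded-simple (it has no nonzero proper ℤ₂-graded two-sided ideals) and central (its center equals K·1). Then for every ℤ₂-graded associative unital K-algebra B there exists an A-universal supermap for B, i.e. a supercommutative K-algebra Ξ and a graded K-algebra homomorphism ρ: B → A⊗Ξ such that (a) the only graded unital K-subalgebra Ξ' of Ξ with ρ(B) ⊆ A⊗Ξ' is Ξ' = Ξ, and (b) for every supercommutative K-algebra F and every graded homomorphism κ: B → A⊗F there exists a graded homomorphism ζ: Ξ → F with (id_A⊗ζ)∘ρ = κ. -/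
open TensorProduct

universe u

section SuperDefs

variable (K : Type u) [Field K]

/-- A ℤ₂-decomposition of a `K`-module. -/
def IsZ2Decomp {A : Type*} [AddCommGroup A] [Module K A]
    (𝒜 : ZMod 2 → Submodule K A) : Prop :=
  𝒜 0 ⊔ 𝒜 1 = ⊤ ∧ 𝒜 0 ⊓ 𝒜 1 = ⊥

/-- A ℤ₂-grading on a `K`-algebra. -/
def IsZ2Grading {A : Type*} [Ring A] [Algebra K A]
    (𝒜 : ZMod 2 → Submodule K A) : Prop :=
  IsZ2Decomp K 𝒜 ∧ (1 : A) ∈ 𝒜 0 ∧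
    ∀ i j : ZMod 2, ∀ a ∈ 𝒜 i, ∀ b ∈ 𝒜 j, a * b ∈ 𝒜 (i + j)

/-- Homogeneous elements supercommute. -/
def IsSupercommutative {A : Type*} [Ring A] [Algebra K A]
    (𝒜 : ZMod 2 → Submodule K A) : Prop :=
  ∀ i j : ZMod 2, ∀ a ∈ 𝒜 i, ∀ b ∈ 𝒜 j,
    a * b = (-1 : K) ^ (i.val * j.val) • (b * a)

/-- The super (ℤ₂-) grading on a tensor product. -/
def superTensorGrading {A Ξ : Type*} [AddCommGroup A] [Module K A]
    [AddCommGroup Ξ] [Module K Ξ]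
    (𝒜 : ZMod 2 → Submodule K A) (𝒳 : ZMod 2 → Submodule K Ξ)
    (k : ZMod 2) : Submodule K (A ⊗[K] Ξ) :=
  LinearMap.range (TensorProduct.map (𝒜 0).subtype (𝒳 k).subtype) ⊔
    LinearMap.range (TensorProduct.map (𝒜 1).subtype (𝒳 (k + 1)).subtype)

/-- A graded homomorphism of ℤ₂-graded algebras. -/
def IsGradedHom {B C : Type*} [Ring B] [Algebra K B] [Ring C] [Algebra K C]
    (ℬ : ZMod 2 → Submodule K B) (𝒞 : ZMod 2 → Submodule K C)
    (f : B →ₐ[K] C) : Prop :=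
  ∀ k : ZMod 2, ∀ b ∈ ℬ k, f b ∈ 𝒞 k

/-- A graded (homogeneous) subspace. -/
def IsGradedSubmodule {A : Type*} [AddCommGroup A] [Module K A]
    (𝒜 : ZMod 2 → Submodule K A) (W : Submodule K A) : Prop :=
  W = (W ⊓ 𝒜 0) ⊔ (W ⊓ 𝒜 1)

/-- A graded (homogeneous) subalgebra. -/
def IsGradedSubalgebra {A : Type*} [Ring A] [Algebra K A]
    (𝒜 : ZMod 2 → Submodule K A) (S : Subalgebra K A) : Prop :=
  IsGradedSubmodule K 𝒜 (Subalgebra.toSubmodule S)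

/-- A `K`-subspace which is a two-sided ideal. -/
def IsTwoSidedSubmodule {A : Type*} [Ring A] [Algebra K A]
    (I : Submodule K A) : Prop :=
  ∀ a : A, ∀ x ∈ I, a * x ∈ I ∧ x * a ∈ I

/-- Graded-simplicity: no nonzero proper graded two-sided ideals. -/
def IsGradedSimple {A : Type*} [Ring A] [Algebra K A]
    (𝒜 : ZMod 2 → Submodule K A) : Prop :=
  ∀ I : Submodule K A, IsTwoSidedSubmodule K I → IsGradedSubmodule K 𝒜 I →
    I = ⊥ ∨ I = ⊤

/-- A supercommutative `K`-algebra (algebra of superscalars). -/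
structure SuperAlg : Type (u + 1) where
  carrier : Type u
  [ring : Ring carrier]
  [alg : Algebra K carrier]
  grading : ZMod 2 → Submodule K carrier
  isGrading : IsZ2Grading K grading
  isSupercomm : IsSupercommutative K grading

attribute [instance] SuperAlg.ring SuperAlg.alg

/-- `ρ(B) ⊆ A ⊗ S` for a subalgebra `S` of `Ξ`. -/
def MapsIntoTensorSub {A B Ξ : Type u} [Ring A] [Algebra K A] [Ring B] [Algebra K B]
    [Ring Ξ] [Algebra K Ξ] (ρ : B →ₐ[K] A ⊗[K] Ξ) (S : Subalgebra K Ξ) : Prop :=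
  ∀ b : B, ρ b ∈ LinearMap.range
    (TensorProduct.map (LinearMap.id : A →ₗ[K] A) (Subalgebra.toSubmodule S).subtype)

/-- `(Ξ, ρ)` is an `A`-universal supermap for `B`. -/
def IsUniversalSupermap {A : Type u} [Ring A] [Algebra K A]
    (𝒜 : ZMod 2 → Submodule K A)
    {B : Type u} [Ring B] [Algebra K B] (ℬ : ZMod 2 → Submodule K B)
    (Ξ : SuperAlg K) (ρ : B →ₐ[K] A ⊗[K] Ξ.carrier) : Prop :=
  IsGradedHom K ℬ (superTensorGrading K 𝒜 Ξ.grading) ρ ∧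
  (∀ S : Subalgebra K Ξ.carrier, IsGradedSubalgebra K Ξ.grading S →
      MapsIntoTensorSub K ρ S → S = ⊤) ∧
  ∀ (F : SuperAlg K) (κ : B →ₐ[K] A ⊗[K] F.carrier),
    IsGradedHom K ℬ (superTensorGrading K 𝒜 F.grading) κ →
    ∃ ζ : Ξ.carrier →ₐ[K] F.carrier, IsGradedHom K Ξ.grading F.grading ζ ∧
      (Algebra.TensorProduct.map (AlgHom.id K A) ζ).comp ρ = κ

end SuperDefs

/-!
A graded homomorphism `κ : B → A ⊗ F` is determined by its coefficients `F ∋ κᵢ(b)` in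
`κ(b) = ∑ aᵢ ⊗ κᵢ(b)`, where `(aᵢ)` is a homogeneous basis of `A`. Take the free algebra on symbols
`(i, b)` and identify two elements when they have the same value at the coefficients of every
graded homomorphism `κ` into every supercommutative `F`. An identity valid in all the `F` holds in
this quotient `Ξ`: it is supercommutative, and `ρ(b) = ∑ aᵢ ⊗ (i, b)` is multiplicative. Evaluation
at the coefficients of a given `κ` is the map `ζ`, and `Ξ` is generated by the coefficients of `ρ`.
-/

section TensorCoeff

variable {R M N N' ι : Type*} [CommSemiring R] [AddCommMonoid M] [Module R M]
  [AddCommMonoid N] [Module R N] [AddCommMonoid N'] [Module R N'] (a : Module.Basis ι R M)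

/-- The coefficient `tᵢ` of a tensor `t = ∑ aᵢ ⊗ tᵢ` expanded in a basis `a` of the left factor. -/
noncomputable def tensorCoeff (i : ι) : M ⊗[R] N →ₗ[R] N :=
  TensorProduct.lid R N ∘ₗ (a.coord i).rTensor N

@[simp]
theorem tensorCoeff_tmul (i : ι) (m : M) (n : N) :
    tensorCoeff a i (m ⊗ₜ[R] n) = a.repr m i • n := by
  simp [tensorCoeff]

theorem sum_tmul_tensorCoeff [Fintype ι] (t : M ⊗[R] N) :
    ∑ i, a i ⊗ₜ[R] tensorCoeff a i t = t := by
  induction t with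
  | zero => simp
  | add s t hs ht => simp only [map_add, tmul_add, Finset.sum_add_distrib, hs, ht]
  | tmul m n => simp only [tensorCoeff_tmul, ← smul_tmul, ← sum_tmul, a.sum_repr]

theorem tensorCoeff_sum_tmul [Fintype ι] (c : ι → N) (i : ι) :
    tensorCoeff a i (∑ j, a j ⊗ₜ[R] c j) = c i := by
  classical simp [Finsupp.single_apply]

theorem tensorCoeff_lTensor (f : N →ₗ[R] N') (i : ι) (t : M ⊗[R] N) :
    tensorCoeff a i (f.lTensor M t) = f (tensorCoeff a i t) := by
  induction t with
  | zero => simp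
  | add s t hs ht => simp only [map_add, hs, ht]
  | tmul m n => simp

theorem ext_tensorCoeff {s t : M ⊗[R] N} (h : ∀ i, tensorCoeff a i s = tensorCoeff a i t) :
    s = t := by
  classical
  refine (TensorProduct.equivFinsuppOfBasisLeft a).injective (Finsupp.ext fun i => ?_)
  simp only [TensorProduct.equivFinsuppOfBasisLeft_apply]
  exact h i

end TensorCoeff

section Decomposition

theorem iSup_zmod_two {α : Type*} [CompleteLattice α] (f : ZMod 2 → α) :
    ⨆ k, f k = f 0 ⊔ f 1 :=
  le_antisymm (iSup_le fun k => by fin_cases k; exacts [le_sup_left, le_sup_right])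
    (sup_le (le_iSup f 0) (le_iSup f 1))

theorem iSup_eq_top_of_adjoin_eq_top {ι R D : Type*} [AddMonoid ι]
    [CommSemiring R] [Semiring D] [Algebra R D] (𝒟 : ι → Submodule R D) [SetLike.GradedMonoid 𝒟]
    {s : Set D} (hs : Algebra.adjoin R s = ⊤) (hs𝒟 : s ⊆ ↑(⨆ i, 𝒟 i)) : ⨆ i, 𝒟 i = ⊤ := by
  classical
  rw [Submodule.iSup_eq_toSubmodule_range] at hs𝒟 ⊢
  rw [Algebra.toSubmodule_eq_top, eq_top_iff, ← hs]
  exact Algebra.adjoin_le hs𝒟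

variable {K : Type*} [Field K]

theorem IsZ2Decomp.isInternal {A : Type*} [AddCommGroup A] [Module K A]
    {𝒜 : ZMod 2 → Submodule K A} (h : IsZ2Decomp K 𝒜) : DirectSum.IsInternal 𝒜 := by
  have huniv : (Set.univ : Set (ZMod 2)) = {0, 1} :=
    (Set.eq_univ_of_forall (by simpa using by decide)).symm
  rw [DirectSum.isInternal_submodule_iff_isCompl 𝒜 zero_ne_one huniv]
  exact ⟨disjoint_iff.2 h.2, codisjoint_iff.2 h.1⟩

theorem IsZ2Grading.gradedMonoid {A : Type*} [Ring A] [Algebra K A]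
    {𝒜 : ZMod 2 → Submodule K A} (h : IsZ2Grading K 𝒜) : SetLike.GradedMonoid 𝒜 where
  one_mem := h.2.1
  mul_mem _ _ _ _ ha hb := h.2.2 _ _ _ ha _ hb

end Decomposition

section SuperTensorGrading

variable {K A F : Type*} [Field K] [AddCommGroup A] [Module K A] [AddCommGroup F] [Module K F]
  {𝒜 : ZMod 2 → Submodule K A} {ℱ : ZMod 2 → Submodule K F}

theorem tmul_mem_superTensorGrading {j k : ZMod 2} {x : A} {f : F} (hx : x ∈ 𝒜 j)
    (hf : f ∈ ℱ (k + j)) : x ⊗ₜ[K] f ∈ superTensorGrading K 𝒜 ℱ k := by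
  fin_cases j
  · exact Submodule.mem_sup_left ⟨⟨x, hx⟩ ⊗ₜ ⟨f, add_zero k ▸ hf⟩, rfl⟩
  · exact Submodule.mem_sup_right ⟨⟨x, hx⟩ ⊗ₜ ⟨f, hf⟩, rfl⟩

theorem superTensorGrading_le {k : ZMod 2} {W : Submodule K (A ⊗[K] F)}
    (h : ∀ j, ∀ x ∈ 𝒜 j, ∀ f ∈ ℱ (k + j), x ⊗ₜ[K] f ∈ W) : superTensorGrading K 𝒜 ℱ k ≤ W := by
  simp only [superTensorGrading, TensorProduct.range_map, Submodule.range_subtype]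
  refine sup_le ?_ ?_
  · exact Submodule.map₂_le.2 fun x hx f hf => h 0 x hx f (by simpa using hf)
  · exact Submodule.map₂_le.2 fun x hx f hf => h 1 x hx f hf

theorem tensorCoeff_collectedBasis_mem {α : ZMod 2 → Type*} (h𝒜 : DirectSum.IsInternal 𝒜)
    (v : ∀ k, Module.Basis (α k) K (𝒜 k)) {k : ZMod 2} {t : A ⊗[K] F}
    (ht : t ∈ superTensorGrading K 𝒜 ℱ k) (i : Σ k, α k) :
    tensorCoeff (h𝒜.collectedBasis v) i t ∈ ℱ (k + i.1) := by
  suffices superTensorGrading K 𝒜 ℱ k ≤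
      (ℱ (k + i.1)).comap (tensorCoeff (h𝒜.collectedBasis v) i) from this ht
  refine superTensorGrading_le fun j x hx f hf => ?_
  rw [Submodule.mem_comap, tensorCoeff_tmul]
  obtain rfl | hij := eq_or_ne j i.1
  · exact Submodule.smul_mem _ _ hf
  · rw [h𝒜.collectedBasis_repr_of_mem_ne v hij hx, zero_smul]
    exact Submodule.zero_mem _

end SuperTensorGrading

section JointImage

variable (R : Type*) [CommRing R] {X π : Type*} {C : π → Type*} [∀ P, Ring (C P)]
  [∀ P, Algebra R (C P)] (v : ∀ P, X → C P)

/-- The subalgebra of `Π P, C P` generated by the families `(v P x)_P`, for `x : X`. It is encoded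
as a quotient of the free algebra on `X`, so that its universe does not depend on that of the index
type `π`: below, `π` is the large type of all supermaps. -/
abbrev JointImage :=
  (RingCon.ker (FreeAlgebra.lift R fun x P => v P x).toRingHom).Quotient

namespace JointImage

/-- The generator `(v P x)_P` of the joint image. -/
def of (x : X) : JointImage R v := RingCon.mkₐ R _ (FreeAlgebra.ι R x)

/-- The projection of the joint image, as a subalgebra of `Π P, C P`, to the factor `C P`. -/
noncomputable def eval (P : π) : JointImage R v →ₐ[R] C P :=
  (Pi.evalAlgHom R C P).comp (RingCon.kerLiftₐ _)

@[simp]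
theorem eval_of (P : π) (x : X) : eval R v P (of R v x) = v P x :=
  congrFun (FreeAlgebra.lift_ι_apply (fun x P => v P x) x) P

variable {R v}

theorem ext_eval {x y : JointImage R v} (h : ∀ P, eval R v P x = eval R v P y) : x = y :=
  RingCon.kerLiftₐ_injective _ (funext h)

variable (R v)

theorem adjoin_range_of : Algebra.adjoin R (Set.range (of R v)) = ⊤ := by
  change Algebra.adjoin R (Set.range (RingCon.mkₐ R _ ∘ FreeAlgebra.ι R)) = ⊤
  rw [Set.range_comp, ← AlgHom.map_adjoin, FreeAlgebra.adjoin_range_ι, Algebra.map_top,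
    RingCon.range_mkₐ]

variable {R} {I : Type*} (𝒞 : ∀ P, I → Submodule R (C P))

/-- The grading that the joint image inherits from gradings of the factors `C P`. -/
noncomputable def grading (i : I) : Submodule R (JointImage R v) :=
  ⨅ P, (𝒞 P i).comap (eval R v P).toLinearMap

variable {v 𝒞}

theorem mem_grading {i : I} {x : JointImage R v} :
    x ∈ grading v 𝒞 i ↔ ∀ P, eval R v P x ∈ 𝒞 P i := by
  simp [grading]

theorem disjoint_grading {i j : I} (h : ∀ P, Disjoint (𝒞 P i) (𝒞 P j)) :
    Disjoint (grading v 𝒞 i) (grading v 𝒞 j) := by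
  refine Submodule.disjoint_def.2 fun x hi hj => ext_eval fun P => ?_
  rw [Submodule.disjoint_def.1 (h P) _ (mem_grading.1 hi P) (mem_grading.1 hj P), map_zero]

theorem gradedMonoid [AddMonoid I] (h : ∀ P, SetLike.GradedMonoid (𝒞 P)) :
    SetLike.GradedMonoid (grading v 𝒞) where
  one_mem := mem_grading.2 fun P => by
    simpa only [map_one] using (h P).one_mem
  mul_mem _ _ _ _ hx hy := mem_grading.2 fun P => by
    simpa only [map_mul] using (h P).mul_mem (mem_grading.1 hx P) (mem_grading.1 hy P)

section IsZ2Grading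

variable {K : Type*} [Field K] [∀ P, Algebra K (C P)] {𝒢 : ∀ P, ZMod 2 → Submodule K (C P)}

theorem isSupercommutative_grading (h : ∀ P, IsSupercommutative K (𝒢 P)) :
    IsSupercommutative K (grading v 𝒢) := fun i j x hx y hy => ext_eval fun P => by
  simpa only [map_mul, map_smul] using h P i j _ (mem_grading.1 hx P) _ (mem_grading.1 hy P)

theorem isZ2Grading_grading (h : ∀ P, IsZ2Grading K (𝒢 P))
    (hof : ∀ x, of K v x ∈ grading v 𝒢 0 ⊔ grading v 𝒢 1) : IsZ2Grading K (grading v 𝒢) := by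
  have hgraded : SetLike.GradedMonoid (grading v 𝒢) := gradedMonoid fun P => (h P).gradedMonoid
  have hsup : ⨆ k, grading v 𝒢 k = ⊤ :=
    iSup_eq_top_of_adjoin_eq_top _ (adjoin_range_of K v) <| by
      rw [iSup_zmod_two]
      exact Set.range_subset_iff.2 hof
  have hdisj : Disjoint (grading v 𝒢 0) (grading v 𝒢 1) :=
    disjoint_grading fun P => disjoint_iff.2 (h P).1.2
  exact ⟨⟨iSup_zmod_two (grading v 𝒢) ▸ hsup, hdisj.eq_bot⟩, hgraded.one_mem,
    fun _ _ _ hx _ hy => hgraded.mul_mem hx hy⟩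

end IsZ2Grading

end JointImage

end JointImage

section GenericMap

variable {R A : Type*} [CommRing R] [Ring A] [Algebra R A] {ι π : Type*}
  {C : π → Type*} [∀ P, Ring (C P)] [∀ P, Algebra R (C P)]

theorem tensorCoeff_map (a : Module.Basis ι R A) {D E : Type*} [Ring D] [Algebra R D]
    [Ring E] [Algebra R E] (f : D →ₐ[R] E) (i : ι) (t : A ⊗[R] D) :
    tensorCoeff a i (Algebra.TensorProduct.map (AlgHom.id R A) f t) = f (tensorCoeff a i t) :=
  tensorCoeff_lTensor a f.toLinearMap i t

theorem JointImage.ext_map_eval (a : Module.Basis ι R A) {X : Type*} {v : ∀ P, X → C P}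
    {s t : A ⊗[R] JointImage R v}
    (h : ∀ P, Algebra.TensorProduct.map (AlgHom.id R A) (eval R v P) s =
      Algebra.TensorProduct.map (AlgHom.id R A) (eval R v P) t) : s = t :=
  ext_tensorCoeff a fun i => ext_eval fun P => by rw [← tensorCoeff_map, ← tensorCoeff_map, h P]

variable (a : Module.Basis ι R A) {B : Type*} [Ring B] [Algebra R B] (κ : ∀ P, B →ₐ[R] A ⊗[R] C P)

/-- The coefficients, in the basis `a` of `A`, of a family of homomorphisms `κ P : B → A ⊗ C P`. -/
noncomputable def homCoeff (P : π) (x : ι × B) : C P :=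
  tensorCoeff a x.1 (κ P x.2)

theorem of_homCoeff_add (i : ι) (b c : B) :
    JointImage.of R (homCoeff a κ) (i, b + c) =
      JointImage.of R (homCoeff a κ) (i, b) + JointImage.of R (homCoeff a κ) (i, c) :=
  JointImage.ext_eval fun P => by simp only [JointImage.eval_of, homCoeff, map_add]

theorem map_eval_sum_tmul_of [Fintype ι] (P : π) (b : B) :
    Algebra.TensorProduct.map (AlgHom.id R A) (JointImage.eval R (homCoeff a κ) P)
      (∑ i, a i ⊗ₜ[R] JointImage.of R (homCoeff a κ) (i, b)) = κ P b := by
  simp only [map_sum, Algebra.TensorProduct.map_tmul, AlgHom.id_apply, JointImage.eval_of, homCoeff,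
    sum_tmul_tensorCoeff]

/-- The homomorphism `b ↦ ∑ aᵢ ⊗ (i, b)` with values in `A ⊗ Ξ`, where `Ξ` is generated by the
coefficients `(i, b)` of a family `κ`; every member of the family is a specialization of it. -/
noncomputable def genericMap [Fintype ι] : B →ₐ[R] A ⊗[R] JointImage R (homCoeff a κ) where
  toFun b := ∑ i, a i ⊗ₜ[R] JointImage.of R (homCoeff a κ) (i, b)
  map_one' := JointImage.ext_map_eval a fun P => by simp only [map_eval_sum_tmul_of, map_one]
  map_mul' b c := JointImage.ext_map_eval a fun P => by simp only [map_eval_sum_tmul_of, map_mul]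
  map_zero' := JointImage.ext_map_eval a fun P => by simp only [map_eval_sum_tmul_of, map_zero]
  map_add' b c := JointImage.ext_map_eval a fun P => by simp only [map_eval_sum_tmul_of, map_add]
  commutes' r := JointImage.ext_map_eval a fun P => by
    simp only [map_eval_sum_tmul_of, AlgHom.commutes]

theorem map_eval_comp_genericMap [Fintype ι] (P : π) :
    (Algebra.TensorProduct.map (AlgHom.id R A) (JointImage.eval R (homCoeff a κ) P)).comp
      (genericMap a κ) = κ P :=
  AlgHom.ext (map_eval_sum_tmul_of a κ P)

theorem tensorCoeff_genericMap [Fintype ι] (i : ι) (b : B) :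
    tensorCoeff a i (genericMap a κ b) = JointImage.of R (homCoeff a κ) (i, b) :=
  tensorCoeff_sum_tmul a (fun j => JointImage.of R (homCoeff a κ) (j, b)) i

end GenericMap

theorem eq_top_of_mapsIntoTensorSub_genericMap {K A B : Type u} [Field K] [Ring A] [Algebra K A]
    [Ring B] [Algebra K B] {ι : Type} [Fintype ι] (a : Module.Basis ι K A) {π : Type*}
    {C : π → Type*} [∀ P, Ring (C P)] [∀ P, Algebra K (C P)] (κ : ∀ P, B →ₐ[K] A ⊗[K] C P)
    {S : Subalgebra K (JointImage K (homCoeff a κ))}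
    (hS : MapsIntoTensorSub K (genericMap a κ) S) : S = ⊤ := by
  rw [eq_top_iff, ← JointImage.adjoin_range_of K (homCoeff a κ)]
  refine Algebra.adjoin_le (Set.range_subset_iff.2 fun ⟨i, b⟩ => ?_)
  obtain ⟨s, hs⟩ := hS b
  rw [← tensorCoeff_genericMap, ← hs, SetLike.mem_coe]
  have hcoeff := tensorCoeff_lTensor a (Subalgebra.toSubmodule S).subtype i s
  exact hcoeff ▸ (tensorCoeff a i s).2

section Supermap

variable {K A B : Type u} [Field K] [Ring A] [Algebra K A] [Ring B] [Algebra K B]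

/-- An `A`-supermap of `B`: a graded homomorphism `B → A ⊗ F` with `F` supercommutative. -/
structure Supermap (𝒜 : ZMod 2 → Submodule K A) (ℬ : ZMod 2 → Submodule K B) : Type (u + 1) where
  target : SuperAlg K
  toAlgHom : B →ₐ[K] A ⊗[K] target.carrier
  isGradedHom : IsGradedHom K ℬ (superTensorGrading K 𝒜 target.grading) toAlgHom

namespace Supermap

variable {𝒜 : ZMod 2 → Submodule K A} (ℬ : ZMod 2 → Submodule K B) (h𝒜 : DirectSum.IsInternal 𝒜)
  {α : ZMod 2 → Type} (v : ∀ k, Module.Basis (α k) K (𝒜 k))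

/-- The coefficients of all supermaps of `B`, in the homogeneous basis of `A` collected from bases
`v` of its graded pieces. -/
noncomputable abbrev coeff : ∀ P : Supermap 𝒜 ℬ, (Σ k, α k) × B → P.target.carrier :=
  homCoeff (h𝒜.collectedBasis v) toAlgHom

/-- The parity grading of the algebra generated by the coefficients of all supermaps of `B`. -/
noncomputable abbrev coeffGrading : ZMod 2 → Submodule K (JointImage K (coeff ℬ h𝒜 v)) :=
  JointImage.grading _ fun P => P.target.grading

variable {ℬ}

theorem of_mem_coeffGrading {k : ZMod 2} {b : B} (hb : b ∈ ℬ k) (i : Σ k, α k) :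
    JointImage.of K (coeff ℬ h𝒜 v) (i, b) ∈ coeffGrading ℬ h𝒜 v (k + i.1) :=
  JointImage.mem_grading.2 fun P => by
    rw [JointImage.eval_of]
    exact tensorCoeff_collectedBasis_mem h𝒜 v (P.isGradedHom k b hb) i

theorem of_mem_sup_coeffGrading (hℬ : IsZ2Decomp K ℬ) (x : (Σ k, α k) × B) :
    JointImage.of K (coeff ℬ h𝒜 v) x ∈ coeffGrading ℬ h𝒜 v 0 ⊔ coeffGrading ℬ h𝒜 v 1 := by
  obtain ⟨i, b⟩ := x
  obtain ⟨b₀, hb₀, b₁, hb₁, rfl⟩ := Submodule.mem_sup.1 (hℬ.1 ▸ Submodule.mem_top : b ∈ ℬ 0 ⊔ ℬ 1)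
  rw [of_homCoeff_add, ← iSup_zmod_two]
  exact add_mem (Submodule.mem_iSup_of_mem _ (of_mem_coeffGrading h𝒜 v hb₀ i))
    (Submodule.mem_iSup_of_mem _ (of_mem_coeffGrading h𝒜 v hb₁ i))

/-- The algebra generated by the coefficients of all supermaps of `B`, which is the superalgebra of
the universal supermap. -/
noncomputable def coeffSuperAlg (hℬ : IsZ2Decomp K ℬ) : SuperAlg K where
  carrier := JointImage K (coeff ℬ h𝒜 v)
  grading := coeffGrading ℬ h𝒜 v
  isGrading := JointImage.isZ2Grading_grading (fun P => P.target.isGrading)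
    (of_mem_sup_coeffGrading h𝒜 v hℬ)
  isSupercomm := JointImage.isSupercommutative_grading fun P => P.target.isSupercomm

variable [∀ k, Fintype (α k)]

theorem isGradedHom_genericMap :
    IsGradedHom K ℬ (superTensorGrading K 𝒜 (coeffGrading ℬ h𝒜 v))
      (genericMap (h𝒜.collectedBasis v) toAlgHom) := fun _ _ hb =>
  Submodule.sum_mem _ fun i _ =>
    tmul_mem_superTensorGrading (h𝒜.collectedBasis_mem v i) (of_mem_coeffGrading h𝒜 v hb i)

theorem isUniversalSupermap_genericMap (hℬ : IsZ2Decomp K ℬ) :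
    IsUniversalSupermap K 𝒜 ℬ (coeffSuperAlg h𝒜 v hℬ)
      (genericMap (h𝒜.collectedBasis v) toAlgHom) := by
  refine ⟨isGradedHom_genericMap h𝒜 v, fun S _ hS => ?_, fun F κ hκ => ?_⟩
  · exact eq_top_of_mapsIntoTensorSub_genericMap (h𝒜.collectedBasis v) toAlgHom hS
  · let P : Supermap 𝒜 ℬ := ⟨F, κ, hκ⟩
    exact ⟨JointImage.eval K _ P, fun _ _ hx => JointImage.mem_grading.1 hx P,
      map_eval_comp_genericMap _ _ P⟩

end Supermap

end Supermap

theorem exists_universal_supermap_general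
    {K : Type u} [Field K] {A : Type u} [Ring A] [Algebra K A] [FiniteDimensional K A]
    (𝒜 : ZMod 2 → Submodule K A) (h𝒜 : IsZ2Grading K 𝒜)
    {B : Type u} [Ring B] [Algebra K B]
    (ℬ : ZMod 2 → Submodule K B) (hℬ : IsZ2Grading K ℬ) :
    ∃ (Ξ : SuperAlg K) (ρ : B →ₐ[K] A ⊗[K] Ξ.carrier), IsUniversalSupermap K 𝒜 ℬ Ξ ρ :=
  ⟨_, _, Supermap.isUniversalSupermap_genericMap h𝒜.1.isInternal
    (fun k => Module.finBasis K (𝒜 k)) hℬ.1⟩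

/-- Existence of the `A`-universal supermap for any ℤ₂-graded algebra `B`,
where `A` is a finite-dimensional graded-simple central ℤ₂-graded algebra over a field of
characteristic zero. -/
theorem exists_universal_supermap
    {K : Type u} [Field K] [CharZero K]
    {A : Type u} [Ring A] [Algebra K A] [FiniteDimensional K A]
    (𝒜 : ZMod 2 → Submodule K A) (h𝒜 : IsZ2Grading K 𝒜)
    (hsimple : IsGradedSimple K 𝒜)
    (hcentral : Subalgebra.center K A = ⊥)
    {B : Type u} [Ring B] [Algebra K B]
    (ℬ : ZMod 2 → Submodule K B) (hℬ : IsZ2Grading K ℬ) :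
    ∃ (Ξ : SuperAlg K) (ρ : B →ₐ[K] A ⊗[K] Ξ.carrier),
      IsUniversalSupermap K 𝒜 ℬ Ξ ρ :=
  exists_universal_supermap_general 𝒜 h𝒜 ℬ hℬ
end

section
/- Let K be a field of characteristic 0, A a finite-dimensional ℤ₂-graded associative unital K-algebra, B a ℤ₂-graded associative unital K-algebra, and let ρ: B → A⊗Ξ be a graded homomorphism into A tensored with a supercommutative K-algebra Ξ such that the only graded unital K-subalgebra Ξ' of Ξ with ρ(B) ⊆ A⊗Ξ' is Ξ' = Ξ. If F is a supercommutative K-algebra, κ: B → A⊗F is a graded homomorphism, and ζ, ζ': Ξ → F are graded homomorphisms with (id_A⊗ζ)∘ρ = κ = (id_A⊗ζ')∘ρ, then ζ = ζ'. -/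
open TensorProduct

universe u

/-!
Homogeneous components of an element on which two graded maps agree are again such elements, so
the equalizer `S` of `ζ` and `ζ'` is a graded subalgebra of `Ξ`. Since `A` is flat over `K`,
`A ⊗ S` is the equalizer of `id ⊗ ζ` and `id ⊗ ζ'`; it contains `ρ(B)`, so `S = Ξ` by minimality.
-/

section GradedEqualizer

variable {K : Type u} [Field K]

theorem isGradedSubmodule_ker {V W : Type*} [AddCommGroup V] [Module K V]
    [AddCommGroup W] [Module K W] {𝒱 : ZMod 2 → Submodule K V} {𝒲 : ZMod 2 → Submodule K W}
    (h𝒱 : 𝒱 0 ⊔ 𝒱 1 = ⊤) (h𝒲 : 𝒲 0 ⊓ 𝒲 1 = ⊥) {f : V →ₗ[K] W}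
    (hf : ∀ k, ∀ v ∈ 𝒱 k, f v ∈ 𝒲 k) :
    IsGradedSubmodule K 𝒱 (LinearMap.ker f) := by
  refine le_antisymm (fun v hv ↦ ?_) (sup_le inf_le_left inf_le_left)
  have hv_top : v ∈ 𝒱 0 ⊔ 𝒱 1 := h𝒱 ▸ Submodule.mem_top
  obtain ⟨v₀, hv₀, v₁, hv₁, rfl⟩ := Submodule.mem_sup.1 hv_top
  have hsum : f v₀ + f v₁ = 0 := by rwa [LinearMap.mem_ker, map_add] at hv
  have hfv₀ : f v₀ = 0 := by
    have hmem : f v₀ ∈ 𝒲 0 ⊓ 𝒲 1 :=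
      ⟨hf 0 v₀ hv₀, eq_neg_of_add_eq_zero_left hsum ▸ neg_mem (hf 1 v₁ hv₁)⟩
    rwa [h𝒲, Submodule.mem_bot] at hmem
  have hfv₁ : f v₁ = 0 := by rwa [hfv₀, zero_add] at hsum
  exact Submodule.add_mem_sup ⟨hfv₀, hv₀⟩ ⟨hfv₁, hv₁⟩

theorem IsGradedHom.isGradedSubalgebra_equalizer {B C : Type*} [Ring B] [Algebra K B]
    [Ring C] [Algebra K C] {ℬ : ZMod 2 → Submodule K B} {𝒞 : ZMod 2 → Submodule K C}
    (hℬ : ℬ 0 ⊔ ℬ 1 = ⊤) (h𝒞 : 𝒞 0 ⊓ 𝒞 1 = ⊥) {f g : B →ₐ[K] C}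
    (hf : IsGradedHom K ℬ 𝒞 f) (hg : IsGradedHom K ℬ 𝒞 g) :
    IsGradedSubalgebra K ℬ (AlgHom.equalizer f g) := by
  rw [IsGradedSubalgebra, AlgHom.equalizer_toSubmodule, LinearMap.eqLocus_eq_ker_sub]
  exact isGradedSubmodule_ker hℬ h𝒞 fun k b hb ↦ sub_mem (hf k b hb) (hg k b hb)

theorem mapsIntoTensorSub_equalizer_iff {A B Ξ : Type u} {F : Type*} [Ring A] [Algebra K A]
    [Ring B] [Algebra K B] [Ring Ξ] [Algebra K Ξ] [Ring F] [Algebra K F]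
    {ρ : B →ₐ[K] A ⊗[K] Ξ} {f g : Ξ →ₐ[K] F} :
    MapsIntoTensorSub K ρ (AlgHom.equalizer f g) ↔
      (Algebra.TensorProduct.map (AlgHom.id K A) f).comp ρ =
        (Algebra.TensorProduct.map (AlgHom.id K A) g).comp ρ := by
  have hrange : LinearMap.range (TensorProduct.map (LinearMap.id : A →ₗ[K] A)
        (Subalgebra.toSubmodule (AlgHom.equalizer f g)).subtype) =
      LinearMap.eqLocus (f.toLinearMap.lTensor A) (g.toLinearMap.lTensor A) :=
    (Module.Flat.eqLocus_lTensor_eq K A f.toLinearMap g.toLinearMap).symm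
  rw [MapsIntoTensorSub, hrange, DFunLike.ext_iff]
  rfl

theorem universal_supermap_zeta_unique_general {A B Ξ : Type u} {F : Type*}
    [Ring A] [Algebra K A] [Ring B] [Algebra K B] [Ring Ξ] [Algebra K Ξ] [Ring F] [Algebra K F]
    {𝒳 : ZMod 2 → Submodule K Ξ} (h𝒳 : IsZ2Decomp K 𝒳)
    {ℱ : ZMod 2 → Submodule K F} (hℱ : IsZ2Decomp K ℱ) {ρ : B →ₐ[K] A ⊗[K] Ξ}
    (hgen : ∀ S : Subalgebra K Ξ, IsGradedSubalgebra K 𝒳 S → MapsIntoTensorSub K ρ S → S = ⊤)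
    {ζ ζ' : Ξ →ₐ[K] F} (hζ : IsGradedHom K 𝒳 ℱ ζ) (hζ' : IsGradedHom K 𝒳 ℱ ζ')
    (h : (Algebra.TensorProduct.map (AlgHom.id K A) ζ).comp ρ =
      (Algebra.TensorProduct.map (AlgHom.id K A) ζ').comp ρ) :
    ζ = ζ' := by
  have hgraded : IsGradedSubalgebra K 𝒳 (AlgHom.equalizer ζ ζ') :=
    hζ.isGradedSubalgebra_equalizer h𝒳.1 hℱ.2 hζ'
  have hmaps : MapsIntoTensorSub K ρ (AlgHom.equalizer ζ ζ') :=
    mapsIntoTensorSub_equalizer_iff.2 h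
  exact AlgHom.equalizer_eq_top.1 (hgen _ hgraded hmaps)

end GradedEqualizer

/-- Uniqueness of the compatible map `ζ`: if the entries of `ρ(B)` generate `Ξ`
(i.e. the only graded subalgebra `Ξ'` of `Ξ` with `ρ(B) ⊆ A ⊗ Ξ'` is `Ξ` itself), then a graded
homomorphism `ζ : Ξ → F` with `(id_A ⊗ ζ) ∘ ρ = κ` is uniquely determined. -/
theorem universal_supermap_zeta_unique
    {K : Type u} [Field K] [CharZero K]
    {A : Type u} [Ring A] [Algebra K A] [FiniteDimensional K A]
    (𝒜 : ZMod 2 → Submodule K A) (h𝒜 : IsZ2Grading K 𝒜)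
    {B : Type u} [Ring B] [Algebra K B]
    (ℬ : ZMod 2 → Submodule K B) (hℬ : IsZ2Grading K ℬ)
    (Ξ : SuperAlg K) (ρ : B →ₐ[K] A ⊗[K] Ξ.carrier)
    (hρ : IsGradedHom K ℬ (superTensorGrading K 𝒜 Ξ.grading) ρ)
    (hgen : ∀ S : Subalgebra K Ξ.carrier, IsGradedSubalgebra K Ξ.grading S →
      MapsIntoTensorSub K ρ S → S = ⊤)
    (F : SuperAlg K) (κ : B →ₐ[K] A ⊗[K] F.carrier)
    (hκ : IsGradedHom K ℬ (superTensorGrading K 𝒜 F.grading) κ)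
    (ζ ζ' : Ξ.carrier →ₐ[K] F.carrier)
    (hζ : IsGradedHom K Ξ.grading F.grading ζ)
    (hζ' : IsGradedHom K Ξ.grading F.grading ζ')
    (h1 : (Algebra.TensorProduct.map (AlgHom.id K A) ζ).comp ρ = κ)
    (h2 : (Algebra.TensorProduct.map (AlgHom.id K A) ζ').comp ρ = κ) :
    ζ = ζ' :=
  universal_supermap_zeta_unique_general Ξ.isGrading.1 F.isGrading.1 hgen hζ hζ'
    (h1.trans h2.symm)
end

section
/- Let K be a field of characteristic 0 and let S and T be sets. Let R be the quotient of the free associative unital K-algebra on the disjoint union S ⊔ T by the two-sided ideal generated by all elements ss' − s's, st − ts, and tt' + t't, for s, s' ∈ S and t, t' ∈ T. Then R is isomorphic as a K-algebra to the tensor product of the polynomial algebra K[S] on the set of variables S with the exterior algebra Λ(V) of the free K-vector space V with basis T. In particular, the free supercommutative K-algebra on even generators S and odd generators T is isomorphic to K[S] ⊗ Λ(V). -/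
open TensorProduct

universe u

/-- The supercommutativity relations on the free associative algebra on `S ⊕ T`:
`ss' = s's`, `st = ts` and `tt' = -(t't)` (equivalently `tt' + t't = 0`), which present the
quotient by the two-sided ideal generated by `ss' − s's`, `st − ts`, `tt' + t't`. -/
inductive SupercommRel (K : Type u) [Field K] (S T : Type u) :
    FreeAlgebra K (S ⊕ T) → FreeAlgebra K (S ⊕ T) → Prop
  | comm_ss (s s' : S) :
      SupercommRel K S T
        (FreeAlgebra.ι K (Sum.inl s) * FreeAlgebra.ι K (Sum.inl s'))
        (FreeAlgebra.ι K (Sum.inl s') * FreeAlgebra.ι K (Sum.inl s))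
  | comm_st (s : S) (t : T) :
      SupercommRel K S T
        (FreeAlgebra.ι K (Sum.inl s) * FreeAlgebra.ι K (Sum.inr t))
        (FreeAlgebra.ι K (Sum.inr t) * FreeAlgebra.ι K (Sum.inl s))
  | anticomm_tt (t t' : T) :
      SupercommRel K S T
        (FreeAlgebra.ι K (Sum.inr t) * FreeAlgebra.ι K (Sum.inr t'))
        (-(FreeAlgebra.ι K (Sum.inr t') * FreeAlgebra.ι K (Sum.inr t)))

/-!
`RingQuot (SupercommRel K S T)` and `K[S] ⊗ Λ(V)` have the same universal property: a homomorphism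
from either to `A` is a family in `A` indexed by `S ⊕ T` satisfying the supercommutativity
relations. The quotient has it by construction. For the tensor product, an anticommuting family
`y` spans elements `v` with `v * v = -(v * v)`; as `2` is invertible these square to zero, so `y`
extends to `Λ(V)`, and the extension commutes with that of the even part to `K[S]`.
-/

theorem commute_of_mem_adjoin_of_mem_adjoin {R A : Type*} [CommSemiring R] [Semiring A]
    [Algebra R A] {s t : Set A} {a b : A} (ha : a ∈ Algebra.adjoin R s)
    (hb : b ∈ Algebra.adjoin R t) (h : ∀ x ∈ s, ∀ y ∈ t, Commute x y) : Commute a b :=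
  Algebra.commute_of_mem_adjoin_of_forall_mem_commute hb fun y hy =>
    (Algebra.commute_of_mem_adjoin_of_forall_mem_commute ha fun x hx => (h x hx y hy).symm).symm

section CommutingFamily

variable {σ A : Type*} (R : Type*) [CommSemiring R] [Semiring A] [Algebra R A] {x : σ → A}

open scoped IsMulCommutative in
/-- Evaluation of polynomials at a family of pairwise commuting elements of a possibly
noncommutative algebra: `MvPolynomial.aeval` into the commutative subalgebra they generate. -/
noncomputable def aevalOfCommute (hx : ∀ i j, Commute (x i) (x j)) : MvPolynomial σ R →ₐ[R] A :=
  have := Algebra.isMulCommutative_adjoin R (s := Set.range x) (by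
    rintro _ ⟨i, rfl⟩ _ ⟨j, rfl⟩
    exact hx i j)
  (Algebra.adjoin R (Set.range x)).val.comp <|
    MvPolynomial.aeval fun i =>
      (⟨x i, Algebra.subset_adjoin ⟨i, rfl⟩⟩ : Algebra.adjoin R (Set.range x))

@[simp]
theorem aevalOfCommute_X (hx : ∀ i j, Commute (x i) (x j)) (i : σ) :
    aevalOfCommute R hx (MvPolynomial.X i) = x i := by
  simp [aevalOfCommute]

theorem aevalOfCommute_mem_adjoin (hx : ∀ i j, Commute (x i) (x j)) (p : MvPolynomial σ R) :
    aevalOfCommute R hx p ∈ Algebra.adjoin R (Set.range x) :=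
  Subtype.property _

end CommutingFamily

section AnticommutingFamily

variable {τ A : Type*} (R : Type*) [CommRing R] [Ring A] [Algebra R A] {y : τ → A}

theorem linearCombination_anticomm (hy : ∀ i j, y i * y j = -(y j * y i)) (v w : τ →₀ R) :
    Finsupp.linearCombination R y v * Finsupp.linearCombination R y w =
      -(Finsupp.linearCombination R y w * Finsupp.linearCombination R y v) := by
  induction v using Finsupp.induction_linear with
  | zero => simp
  | add v₁ v₂ h₁ h₂ => rw [map_add, add_mul, mul_add, h₁, h₂, neg_add]
  | single i c =>
    induction w using Finsupp.induction_linear with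
    | zero => simp
    | add w₁ w₂ h₁ h₂ => rw [map_add, add_mul, mul_add, h₁, h₂, neg_add]
    | single j d =>
      simp only [Finsupp.linearCombination_single, smul_mul_smul_comm]
      rw [hy, mul_comm c, smul_neg]

variable [Invertible (2 : R)]

theorem linearCombination_mul_self_eq_zero (hy : ∀ i j, y i * y j = -(y j * y i)) (v : τ →₀ R) :
    Finsupp.linearCombination R y v * Finsupp.linearCombination R y v = 0 := by
  have two_smul_eq_zero : (2 : R) •
      (Finsupp.linearCombination R y v * Finsupp.linearCombination R y v) = 0 := by
    rw [two_smul]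
    exact eq_neg_iff_add_eq_zero.mp (linearCombination_anticomm R hy v v)
  exact ((isUnit_of_invertible (2 : R)).smul_eq_zero).mp two_smul_eq_zero

/-- The extension of a family of pairwise anticommuting elements to the exterior algebra of the
free module on its index type. -/
noncomputable def exteriorLift (hy : ∀ i j, y i * y j = -(y j * y i)) :
    ExteriorAlgebra R (τ →₀ R) →ₐ[R] A :=
  ExteriorAlgebra.lift R
    ⟨Finsupp.linearCombination R y, linearCombination_mul_self_eq_zero R hy⟩

@[simp]
theorem exteriorLift_ι (hy : ∀ i j, y i * y j = -(y j * y i)) (v : τ →₀ R) :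
    exteriorLift R hy (ExteriorAlgebra.ι R v) = Finsupp.linearCombination R y v :=
  ExteriorAlgebra.lift_ι_apply R _ _ v

theorem exteriorLift_mem_adjoin (hy : ∀ i j, y i * y j = -(y j * y i))
    (a : ExteriorAlgebra R (τ →₀ R)) :
    exteriorLift R hy a ∈ Algebra.adjoin R (Set.range y) := by
  induction a using ExteriorAlgebra.induction with
  | algebraMap r => rw [AlgHom.commutes]; exact algebraMap_mem _ r
  | ι v =>
    rw [exteriorLift_ι]
    apply Algebra.span_le_adjoin
    rw [← Finsupp.range_linearCombination]
    exact LinearMap.mem_range_self _ v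
  | mul a b ha hb => rw [map_mul]; exact mul_mem ha hb
  | add a b ha hb => rw [map_add]; exact add_mem ha hb

end AnticommutingFamily

/-- The family `z` satisfies the supercommutativity relations, with the elements indexed by `S`
even and those indexed by `T` odd. -/
structure IsSupercomm {S T A : Type*} [Ring A] (z : S ⊕ T → A) : Prop where
  even_even (s s' : S) : Commute (z (Sum.inl s)) (z (Sum.inl s'))
  even_odd (s : S) (t : T) : Commute (z (Sum.inl s)) (z (Sum.inr t))
  odd_odd (t t' : T) : z (Sum.inr t) * z (Sum.inr t') = -(z (Sum.inr t') * z (Sum.inr t))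

section TensorProduct

variable (R S T : Type*) [CommRing R]

/-- The generators of `R[S] ⊗ Λ(V)`, where `V` is free on `T`: the variables in `S` and the basis
vectors in `T`. -/
noncomputable def polyExteriorGen : S ⊕ T → MvPolynomial S R ⊗[R] ExteriorAlgebra R (T →₀ R) :=
  Sum.elim (fun s => MvPolynomial.X s ⊗ₜ 1)
    (fun t => 1 ⊗ₜ ExteriorAlgebra.ι R (Finsupp.single t 1))

theorem isSupercomm_polyExteriorGen : IsSupercomm (polyExteriorGen R S T) where
  even_even s s' := (Commute.all _ _).tmul (Commute.one_right _)
  even_odd s t := (Commute.one_right _).tmul (Commute.one_left _)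
  odd_odd t t' := by
    have ι_anticomm := eq_neg_of_add_eq_zero_left
      (ExteriorAlgebra.ι_add_mul_swap (R := R) (Finsupp.single t (1 : R)) (Finsupp.single t' 1))
    simp only [polyExteriorGen, Sum.elim_inr, Algebra.TensorProduct.tmul_mul_tmul, ι_anticomm,
      TensorProduct.tmul_neg]

variable {A : Type*} [Ring A] [Algebra R A]

variable {R S T} in
theorem polyExterior_algHom_ext {f g : MvPolynomial S R ⊗[R] ExteriorAlgebra R (T →₀ R) →ₐ[R] A}
    (h : ∀ i, f (polyExteriorGen R S T i) = g (polyExteriorGen R S T i)) : f = g := by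
  ext i
  · exact h (Sum.inl i)
  · exact h (Sum.inr i)

variable {S T} [Invertible (2 : R)] {z : S ⊕ T → A}

/-- The homomorphism from `R[S] ⊗ Λ(V)` determined by a supercommuting family. -/
noncomputable def polyExteriorLift (hz : IsSupercomm z) :
    MvPolynomial S R ⊗[R] ExteriorAlgebra R (T →₀ R) →ₐ[R] A :=
  Algebra.TensorProduct.lift (aevalOfCommute R hz.even_even) (exteriorLift R hz.odd_odd) fun p a =>
    commute_of_mem_adjoin_of_mem_adjoin (aevalOfCommute_mem_adjoin R hz.even_even p)
      (exteriorLift_mem_adjoin R hz.odd_odd a) <| by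
        rintro _ ⟨s, rfl⟩ _ ⟨t, rfl⟩
        exact hz.even_odd s t

@[simp]
theorem polyExteriorLift_polyExteriorGen (hz : IsSupercomm z) (i : S ⊕ T) :
    polyExteriorLift R hz (polyExteriorGen R S T i) = z i := by
  cases i <;> simp [polyExteriorLift, polyExteriorGen]

end TensorProduct

namespace SupercommRel

variable (K : Type u) [Field K] (S T : Type u)

/-- The images of the free generators in the quotient by the supercommutativity relations. -/
noncomputable def gen (i : S ⊕ T) : RingQuot (SupercommRel K S T) :=
  RingQuot.mkAlgHom K (SupercommRel K S T) (FreeAlgebra.ι K i)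

theorem isSupercomm_gen : IsSupercomm (gen K S T) where
  even_even s s' := by
    simpa only [gen, commute_iff_eq, map_mul] using
      RingQuot.mkAlgHom_rel K (comm_ss (K := K) (T := T) s s')
  even_odd s t := by
    simpa only [gen, commute_iff_eq, map_mul] using
      RingQuot.mkAlgHom_rel K (comm_st (K := K) s t)
  odd_odd t t' := by
    simpa only [gen, map_mul, map_neg] using
      RingQuot.mkAlgHom_rel K (anticomm_tt (K := K) (S := S) t t')

variable {A : Type*} [Ring A] [Algebra K A]

variable {K S T} in
theorem algHom_ext {f g : RingQuot (SupercommRel K S T) →ₐ[K] A}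
    (h : ∀ i, f (gen K S T i) = g (gen K S T i)) : f = g :=
  RingQuot.ringQuot_ext' K f g <| FreeAlgebra.hom_ext <| funext h

variable {S T} {z : S ⊕ T → A}

/-- The homomorphism from the quotient determined by a supercommuting family. -/
noncomputable def lift (hz : IsSupercomm z) : RingQuot (SupercommRel K S T) →ₐ[K] A :=
  RingQuot.liftAlgHom K ⟨FreeAlgebra.lift K z, fun a b hab => by
    cases hab with
    | comm_ss s s' => simpa using (hz.even_even s s').eq
    | comm_st s t => simpa using (hz.even_odd s t).eq
    | anticomm_tt t t' => simpa using hz.odd_odd t t'⟩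

@[simp]
theorem lift_gen (hz : IsSupercomm z) (i : S ⊕ T) :
    lift K hz (gen K S T i) = z i := by
  simp [lift, gen]

end SupercommRel

theorem free_supercommutative_iso_general
    (K : Type u) [Field K] [NeZero (2 : K)] (S T : Type u) :
    Nonempty
      (RingQuot (SupercommRel K S T) ≃ₐ[K]
        (MvPolynomial S K ⊗[K] ExteriorAlgebra K (T →₀ K))) := by
  let _ : Invertible (2 : K) := invertibleOfNonzero two_ne_zero
  exact ⟨AlgEquiv.ofAlgHom
    (SupercommRel.lift K (isSupercomm_polyExteriorGen K S T))
    (polyExteriorLift K (SupercommRel.isSupercomm_gen K S T))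
    (polyExterior_algHom_ext fun i => by simp)
    (SupercommRel.algHom_ext fun i => by simp)⟩

/-- The free supercommutative algebra on even generators `S` and odd
generators `T` — i.e. the quotient of the free associative algebra on `S ⊔ T` by the two-sided
ideal generated by `ss' − s's`, `st − ts` and `tt' + t't` — is isomorphic, as a `K`-algebra,
to `K[S] ⊗ Λ(V)` where `V` is the free `K`-vector space with basis `T`. -/
theorem free_supercommutative_iso
    (K : Type u) [Field K] [CharZero K] (S T : Type u) :
    Nonempty
      (RingQuot (SupercommRel K S T) ≃ₐ[K]
        (MvPolynomial S K ⊗[K] ExteriorAlgebra K (T →₀ K))) :=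
  free_supercommutative_iso_general K S T
end

section
/- Let K be a field of characteristic 0, let A be a finite-dimensional ℤ₂-graded associative unital K-algebra which is graded-simple and central (center = K·1), let B be a ℤ₂-graded associative unital K-algebra, and let (Ξ, ρ) be an A-universal supermap for B. Then for every ℤ₂-graded two-sided ideal I of B there exist a ℤ₂-graded ideal J of Ξ with A⊗J equal to the two-sided ideal of A⊗Ξ generated by ρ(I), and a graded homomorphism ρ': B/I → A⊗(Ξ/J) satisfying ρ'∘p_I = (id_A⊗p_J)∘ρ (where p_I: B → B/I and p_J: Ξ → Ξ/J are the projections), such that the pair (Ξ/J, ρ') is an A-universal supermap for B/I. -/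
open TensorProduct

universe u

section QuotDefs

variable (K : Type u) [Field K]

/-- The relation identifying elements modulo the two-sided ideal `I`. -/
def idealRel {B : Type u} [Ring B] [Algebra K B] (I : Submodule K B) :
    B → B → Prop :=
  fun a b => a - b ∈ I

/-- The induced ℤ₂-grading on the quotient `B ⧸ I` (realized as `RingQuot`). -/
noncomputable def quotGrading {B : Type u} [Ring B] [Algebra K B]
    (ℬ : ZMod 2 → Submodule K B) (I : Submodule K B) :
    ZMod 2 → Submodule K (RingQuot (idealRel K I)) :=
  fun k => (ℬ k).map (RingQuot.mkAlgHom K (idealRel K I)).toLinearMap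

/-- The two-sided ideal (as a `K`-subspace) generated by a set. -/
def twoSidedSpan {A : Type u} [Ring A] [Algebra K A] (s : Set A) : Submodule K A :=
  sInf {I : Submodule K A | IsTwoSidedSubmodule K I ∧ s ⊆ I}

/-- The subspace `A ⊗ J` of `A ⊗ Ξ`. -/
noncomputable def tensorIdeal {A Ξ : Type u} [Ring A] [Algebra K A]
    [Ring Ξ] [Algebra K Ξ] (J : Submodule K Ξ) : Submodule K (A ⊗[K] Ξ) :=
  LinearMap.range (TensorProduct.map (LinearMap.id : A →ₗ[K] A) J.subtype)

end QuotDefs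

/-!
The ideal `J` is generated by all coefficients `(f ⊗ id) (ρ b)`, for `b ∈ I` and `f` a linear form
on `A`. As `A` is central and graded-simple it is simple, so by the density theorem every
endomorphism of `A` agrees on any finite set with some `a ↦ ∑ uᵢ a vᵢ`. Applied to `a ↦ f a • 1`,
this shows that an ideal of `A ⊗ Ξ` contains `1 ⊗ x` for every coefficient `x` of each of its
elements, so that `A ⊗ J` is the ideal generated by `ρ(I)`. An algebra homomorphism `ζ` on `Ξ`
with `id ⊗ ζ` vanishing on `ρ(I)` kills all the coefficients, so the maps given by the universality
of `Ξ` descend to `Ξ / J`.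
-/

section QuotientSupermap

variable {K : Type u} [Field K]

section Graded

variable {V W : Type*} [AddCommGroup V] [Module K V] [AddCommGroup W] [Module K W]
  {𝒱 : ZMod 2 → Submodule K V} {𝒲 : ZMod 2 → Submodule K W}

theorem IsZ2Decomp.isCompl (h𝒱 : IsZ2Decomp K 𝒱) : IsCompl (𝒱 0) (𝒱 1) :=
  ⟨disjoint_iff.2 h𝒱.2, codisjoint_iff.2 h𝒱.1⟩

theorem IsZ2Decomp.exists_add_eq (h𝒱 : IsZ2Decomp K 𝒱) (v : V) :
    ∃ x ∈ 𝒱 0, ∃ y ∈ 𝒱 1, x + y = v :=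
  Submodule.mem_sup.1 (h𝒱.1 ▸ Submodule.mem_top)

theorem IsZ2Decomp.eq_of_add_eq_add (h𝒱 : IsZ2Decomp K 𝒱) {x x' y y' : V} (hx : x ∈ 𝒱 0)
    (hx' : x' ∈ 𝒱 0) (hy : y ∈ 𝒱 1) (hy' : y' ∈ 𝒱 1) (h : x + y = x' + y') : x = x' := by
  have hsub : x - x' = y' - y := by rw [sub_eq_sub_iff_add_eq_add, h, add_comm]
  exact sub_eq_zero.1 <| Submodule.disjoint_def.1 h𝒱.isCompl.disjoint _ (sub_mem hx hx')
    (hsub ▸ sub_mem hy' hy)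

theorem IsZ2Decomp.isGradedSubmodule_iff (h𝒱 : IsZ2Decomp K 𝒱) {U : Submodule K V} :
    IsGradedSubmodule K 𝒱 U ↔ ∀ x ∈ 𝒱 0, ∀ y ∈ 𝒱 1, x + y ∈ U → x ∈ U ∧ y ∈ U := by
  constructor
  · intro hU x hx y hy hxy
    rw [hU] at hxy
    obtain ⟨x', hx', y', hy', h⟩ := Submodule.mem_sup.1 hxy
    obtain rfl := h𝒱.eq_of_add_eq_add hx'.2 hx hy'.2 hy h
    obtain rfl := add_left_cancel h
    exact ⟨hx'.1, hy'.1⟩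
  · refine fun hU => le_antisymm (fun v hv => ?_) (sup_le inf_le_left inf_le_left)
    obtain ⟨x, hx, y, hy, rfl⟩ := h𝒱.exists_add_eq v
    obtain ⟨hxU, hyU⟩ := hU x hx y hy hv
    exact Submodule.add_mem_sup ⟨hxU, hx⟩ ⟨hyU, hy⟩

theorem IsGradedSubmodule.comap (h𝒱 : IsZ2Decomp K 𝒱) (h𝒲 : IsZ2Decomp K 𝒲) {f : V →ₗ[K] W}
    (hf : ∀ k, 𝒱 k ≤ (𝒲 k).comap f) {U : Submodule K W} (hU : IsGradedSubmodule K 𝒲 U) :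
    IsGradedSubmodule K 𝒱 (U.comap f) :=
  h𝒱.isGradedSubmodule_iff.2 fun x hx y hy hxy =>
    h𝒲.isGradedSubmodule_iff.1 hU _ (hf 0 hx) _ (hf 1 hy) (map_add f x y ▸ hxy)

theorem le_sup_zero_one (𝒱 : ZMod 2 → Submodule K V) (k : ZMod 2) : 𝒱 k ≤ 𝒱 0 ⊔ 𝒱 1 := by
  fin_cases k
  exacts [le_sup_left, le_sup_right]

theorem isGradedSubmodule_sup {𝒰 : ZMod 2 → Submodule K V} (h : ∀ k, 𝒰 k ≤ 𝒱 k) :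
    IsGradedSubmodule K 𝒱 (𝒰 0 ⊔ 𝒰 1) :=
  le_antisymm
    (sup_le_sup (le_inf (le_sup_zero_one 𝒰 0) (h 0)) (le_inf (le_sup_zero_one 𝒰 1) (h 1)))
    (sup_le inf_le_left inf_le_left)

variable (𝒱) in
/-- The largest graded subspace contained in `U`. A subspace is graded in the sense of
`IsGradedSubmodule` when it equals its graded core. -/
def gradedCore (U : Submodule K V) : Submodule K V :=
  U ⊓ 𝒱 0 ⊔ U ⊓ 𝒱 1

theorem gradedCore_le (U : Submodule K V) : gradedCore 𝒱 U ≤ U :=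
  sup_le inf_le_left inf_le_left

theorem inf_le_gradedCore (U : Submodule K V) (k : ZMod 2) : U ⊓ 𝒱 k ≤ gradedCore 𝒱 U :=
  le_sup_zero_one (fun k => U ⊓ 𝒱 k) k

theorem isGradedSubmodule_gradedCore (U : Submodule K V) :
    IsGradedSubmodule K 𝒱 (gradedCore 𝒱 U) :=
  isGradedSubmodule_sup (𝒰 := fun k => U ⊓ 𝒱 k) fun _ => inf_le_right

variable (𝒱) in
/-- The smallest graded subspace containing `U`. Its summand `(U ⊔ 𝒱 (k + 1)) ⊓ 𝒱 k` is the
projection of `U` to degree `k`. -/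
def gradedHull (U : Submodule K V) : Submodule K V :=
  (U ⊔ 𝒱 (0 + 1)) ⊓ 𝒱 0 ⊔ (U ⊔ 𝒱 (1 + 1)) ⊓ 𝒱 1

theorem IsZ2Decomp.le_gradedHull (h𝒱 : IsZ2Decomp K 𝒱) (U : Submodule K V) :
    U ≤ gradedHull 𝒱 U := by
  intro v hv
  obtain ⟨x, hx, y, hy, rfl⟩ := h𝒱.exists_add_eq v
  refine Submodule.add_mem_sup ⟨?_, hx⟩ ⟨?_, hy⟩
  · exact Submodule.mem_sup.2 ⟨x + y, hv, -y, neg_mem hy, by abel⟩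
  · exact Submodule.mem_sup.2 ⟨x + y, hv, -x, neg_mem hx, by abel⟩

theorem isGradedSubmodule_gradedHull (U : Submodule K V) :
    IsGradedSubmodule K 𝒱 (gradedHull 𝒱 U) :=
  isGradedSubmodule_sup (𝒰 := fun k => (U ⊔ 𝒱 (k + 1)) ⊓ 𝒱 k) fun _ => inf_le_right

theorem IsZ2Decomp.exists_add_mem_of_mem_gradedHull (h𝒱 : IsZ2Decomp K 𝒱) {U : Submodule K V}
    {x : V} (hx : x ∈ 𝒱 0) (hxU : x ∈ gradedHull 𝒱 U) : ∃ y ∈ 𝒱 1, x + y ∈ U := by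
  obtain ⟨x', ⟨hx'U, hx'⟩, y', ⟨-, hy'⟩, h⟩ := Submodule.mem_sup.1 hxU
  obtain rfl := h𝒱.eq_of_add_eq_add hx' hx hy' (zero_mem _) (h.trans (add_zero x).symm)
  obtain ⟨u, hu, y, hy, rfl⟩ := Submodule.mem_sup.1 hx'U
  exact ⟨-y, neg_mem hy, by rwa [add_neg_cancel_right]⟩

theorem IsZ2Decomp.exists_dual_add_eq (h𝒱 : IsZ2Decomp K 𝒱) (f : V →ₗ[K] K) :
    ∃ f₀ f₁ : V →ₗ[K] K, (∀ v ∈ 𝒱 1, f₀ v = 0) ∧ (∀ v ∈ 𝒱 0, f₁ v = 0) ∧ f₀ + f₁ = f := by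
  refine ⟨f ∘ₗ (𝒱 0).projection _ h𝒱.isCompl, f ∘ₗ (𝒱 1).projection _ h𝒱.isCompl.symm,
    fun v hv => ?_, fun v hv => ?_, ?_⟩
  · rw [LinearMap.comp_apply, Submodule.projection_apply_of_mem_right _ hv, map_zero]
  · rw [LinearMap.comp_apply, Submodule.projection_apply_of_mem_right _ hv, map_zero]
  · rw [← LinearMap.comp_add, Submodule.projection_add_projection_eq_id, LinearMap.comp_id]

end Graded

section GradedIdeals

variable {A : Type*} [Ring A] [Algebra K A] {𝒜 : ZMod 2 → Submodule K A}

theorem isTwoSidedSubmodule_sup_of_graded (h𝒜 : IsZ2Decomp K 𝒜) {𝒰 : ZMod 2 → Submodule K A}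
    (h : ∀ i k, ∀ a ∈ 𝒜 i, ∀ x ∈ 𝒰 k, a * x ∈ 𝒰 (i + k) ∧ x * a ∈ 𝒰 (i + k)) :
    IsTwoSidedSubmodule K (𝒰 0 ⊔ 𝒰 1) := by
  have hom_mul (i k : ZMod 2) {a x : A} (ha : a ∈ 𝒜 i) (hx : x ∈ 𝒰 k) :
      a * x ∈ 𝒰 0 ⊔ 𝒰 1 ∧ x * a ∈ 𝒰 0 ⊔ 𝒰 1 :=
    (h i k a ha x hx).imp (fun h => le_sup_zero_one 𝒰 _ h) (fun h => le_sup_zero_one 𝒰 _ h)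
  have mul_hom (k : ZMod 2) (a : A) {x : A} (hx : x ∈ 𝒰 k) :
      a * x ∈ 𝒰 0 ⊔ 𝒰 1 ∧ x * a ∈ 𝒰 0 ⊔ 𝒰 1 := by
    obtain ⟨b, hb, c, hc, rfl⟩ := h𝒜.exists_add_eq a
    rw [add_mul, mul_add]
    exact ⟨add_mem (hom_mul 0 k hb hx).1 (hom_mul 1 k hc hx).1,
      add_mem (hom_mul 0 k hb hx).2 (hom_mul 1 k hc hx).2⟩
  intro a v hv
  obtain ⟨x, hx, y, hy, rfl⟩ := Submodule.mem_sup.1 hv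
  rw [mul_add, add_mul]
  exact ⟨add_mem (mul_hom 0 a hx).1 (mul_hom 1 a hy).1,
    add_mem (mul_hom 0 a hx).2 (mul_hom 1 a hy).2⟩

theorem IsZ2Grading.mul_mem_comm (h𝒜 : IsZ2Grading K 𝒜) {i k : ZMod 2} {a x : A} (ha : a ∈ 𝒜 i)
    (hx : x ∈ 𝒜 k) : a * x ∈ 𝒜 (i + k) ∧ x * a ∈ 𝒜 (i + k) :=
  ⟨h𝒜.2.2 i k a ha x hx, add_comm k i ▸ h𝒜.2.2 k i x hx a ha⟩

theorem IsTwoSidedSubmodule.gradedCore (h𝒜 : IsZ2Grading K 𝒜) {N : Submodule K A}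
    (hN : IsTwoSidedSubmodule K N) : IsTwoSidedSubmodule K (gradedCore 𝒜 N) :=
  isTwoSidedSubmodule_sup_of_graded (𝒰 := fun k => N ⊓ 𝒜 k) h𝒜.1 fun _ _ a ha x hx =>
    ⟨⟨(hN a x hx.1).1, (h𝒜.mul_mem_comm ha hx.2).1⟩,
      ⟨(hN a x hx.1).2, (h𝒜.mul_mem_comm ha hx.2).2⟩⟩

theorem IsTwoSidedSubmodule.gradedHull (h𝒜 : IsZ2Grading K 𝒜) {N : Submodule K A}
    (hN : IsTwoSidedSubmodule K N) : IsTwoSidedSubmodule K (gradedHull 𝒜 N) := by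
  refine isTwoSidedSubmodule_sup_of_graded (𝒰 := fun k => (N ⊔ 𝒜 (k + 1)) ⊓ 𝒜 k) h𝒜.1 ?_
  rintro i k a ha v ⟨hvN, hv⟩
  obtain ⟨n, hn, y, hy, rfl⟩ := Submodule.mem_sup.1 hvN
  have hy_mul := h𝒜.mul_mem_comm ha hy
  rw [← add_assoc] at hy_mul
  have hv_mul := h𝒜.mul_mem_comm ha hv
  rw [mul_add, add_mul] at hv_mul ⊢
  exact ⟨⟨Submodule.add_mem_sup (hN a n hn).1 hy_mul.1, hv_mul.1⟩,
    ⟨Submodule.add_mem_sup (hN a n hn).2 hy_mul.2, hv_mul.2⟩⟩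

theorem IsTwoSidedSubmodule.eq_top_of_one_mem {N : Submodule K A} (hN : IsTwoSidedSubmodule K N)
    (h1 : (1 : A) ∈ N) : N = ⊤ :=
  eq_top_iff.2 fun a _ => mul_one a ▸ (hN a 1 h1).1

theorem IsGradedSimple.gradedCore_eq_bot (hs : IsGradedSimple K 𝒜) (h𝒜 : IsZ2Grading K 𝒜)
    {N : Submodule K A} (hN : IsTwoSidedSubmodule K N) (hN_top : N ≠ ⊤) : gradedCore 𝒜 N = ⊥ :=
  (hs _ (hN.gradedCore h𝒜) (isGradedSubmodule_gradedCore N)).resolve_right fun h =>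
    hN_top (top_le_iff.1 (h ▸ gradedCore_le N))

theorem IsGradedSimple.gradedHull_eq_top (hs : IsGradedSimple K 𝒜) (h𝒜 : IsZ2Grading K 𝒜)
    {N : Submodule K A} (hN : IsTwoSidedSubmodule K N) (hN_bot : N ≠ ⊥) : gradedHull 𝒜 N = ⊤ :=
  (hs _ (hN.gradedHull h𝒜) (isGradedSubmodule_gradedHull N)).resolve_left fun h =>
    hN_bot (le_bot_iff.1 (h ▸ h𝒜.1.le_gradedHull N))

-- If `N ≠ ⊥`, its graded hull is everything, so `N` contains some `1 + z` with `z` odd. If also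
-- `N ≠ ⊤`, commutators of `1 + z` with homogeneous elements are homogeneous elements of `N`,
-- hence zero: `1 + z` is a scalar, so `z = 0` and `1 ∈ N`.
theorem IsGradedSimple.eq_bot_or_eq_top [Algebra.IsCentral K A] (hs : IsGradedSimple K 𝒜)
    (h𝒜 : IsZ2Grading K 𝒜) {N : Submodule K A} (hN : IsTwoSidedSubmodule K N) :
    N = ⊥ ∨ N = ⊤ := by
  by_contra! ⟨hN_bot, hN_top⟩
  have hcore : gradedCore 𝒜 N = ⊥ := hs.gradedCore_eq_bot h𝒜 hN hN_top
  have h1 : (1 : A) ∈ gradedHull 𝒜 N := hs.gradedHull_eq_top h𝒜 hN hN_bot ▸ Submodule.mem_top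
  obtain ⟨z, hz, hzN⟩ := h𝒜.1.exists_add_mem_of_mem_gradedHull h𝒜.2.1 h1
  have commute_hom {i : ZMod 2} {b : A} (hb : b ∈ 𝒜 i) : b * (1 + z) = (1 + z) * b := by
    have hcomm : b * (1 + z) - (1 + z) * b = b * z - z * b := by noncomm_ring
    have hmem : b * (1 + z) - (1 + z) * b ∈ N ⊓ 𝒜 (i + 1) :=
      ⟨sub_mem (hN b _ hzN).1 (hN b _ hzN).2,
        hcomm ▸ sub_mem (h𝒜.mul_mem_comm hb hz).1 (h𝒜.mul_mem_comm hb hz).2⟩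
    exact sub_eq_zero.1 ((Submodule.mem_bot K).1 (hcore ▸ inf_le_gradedCore N _ hmem))
  have hcenter : 1 + z ∈ Subalgebra.center K A := by
    refine Subalgebra.mem_center_iff.2 fun b => ?_
    obtain ⟨b₀, hb₀, b₁, hb₁, rfl⟩ := h𝒜.1.exists_add_eq b
    rw [add_mul, mul_add (1 + z), commute_hom hb₀, commute_hom hb₁]
  obtain ⟨c, hc⟩ := Algebra.mem_bot.1 (Algebra.IsCentral.out hcenter)
  have hc0 : algebraMap K A c ∈ 𝒜 0 :=
    Algebra.algebraMap_eq_smul_one (A := A) c ▸ (𝒜 0).smul_mem c h𝒜.2.1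
  have hc1 : algebraMap K A c = 1 :=
    h𝒜.1.eq_of_add_eq_add hc0 h𝒜.2.1 (zero_mem _) hz ((add_zero _).trans hc)
  exact hN_top (hN.eq_top_of_one_mem (hc1 ▸ hc ▸ hzN))

theorem IsGradedSimple.isSimpleRing [Nontrivial A] [Algebra.IsCentral K A]
    (hs : IsGradedSimple K 𝒜) (h𝒜 : IsZ2Grading K 𝒜) : IsSimpleRing A := by
  refine isSimpleRing_iff_isTwoSided_imp.2 ⟨inferInstance, fun I _ => ?_⟩
  have hI : IsTwoSidedSubmodule K (I.restrictScalars K) := fun a x hx =>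
    ⟨I.mul_mem_left a hx, I.mul_mem_right a hx⟩
  simpa only [Submodule.restrictScalars_eq_bot_iff, Submodule.restrictScalars_eq_top_iff]
    using hs.eq_bot_or_eq_top h𝒜 hI

end GradedIdeals

section TwoSidedSpan

variable {A : Type u} [Ring A] [Algebra K A]

theorem isTwoSidedSubmodule_twoSidedSpan (s : Set A) :
    IsTwoSidedSubmodule K (twoSidedSpan K s) := by
  intro a x hx
  simp only [twoSidedSpan, Submodule.mem_sInf] at hx ⊢
  exact ⟨fun N hN => (hN.1 a x (hx N hN)).1, fun N hN => (hN.1 a x (hx N hN)).2⟩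

theorem subset_twoSidedSpan (s : Set A) : s ⊆ twoSidedSpan K s := fun _ hx =>
  Submodule.mem_sInf.2 fun _ hN => hN.2 hx

theorem twoSidedSpan_le {s : Set A} {N : Submodule K A} (hN : IsTwoSidedSubmodule K N)
    (hs : s ⊆ N) : twoSidedSpan K s ≤ N :=
  sInf_le ⟨hN, hs⟩

theorem isGradedSubmodule_twoSidedSpan {𝒜 : ZMod 2 → Submodule K A} (h𝒜 : IsZ2Grading K 𝒜)
    {s : Set A} (hs : s ⊆ gradedCore 𝒜 (twoSidedSpan K s)) :
    IsGradedSubmodule K 𝒜 (twoSidedSpan K s) :=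
  le_antisymm (twoSidedSpan_le ((isTwoSidedSubmodule_twoSidedSpan s).gradedCore h𝒜) hs)
    (gradedCore_le _)

end TwoSidedSpan

section TwoSidedMaps

variable {B C : Type*} [Ring B] [Algebra K B] [Ring C] [Algebra K C]

theorem IsTwoSidedSubmodule.comap (φ : B →ₐ[K] C) {N : Submodule K C}
    (hN : IsTwoSidedSubmodule K N) : IsTwoSidedSubmodule K (N.comap φ.toLinearMap) := by
  intro b x hx
  simp only [Submodule.mem_comap, AlgHom.toLinearMap_apply, map_mul] at hx ⊢
  exact hN (φ b) (φ x) hx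

theorem isTwoSidedSubmodule_ker (φ : B →ₐ[K] C) :
    IsTwoSidedSubmodule K (LinearMap.ker φ.toLinearMap) := by
  intro b x hx
  simp only [LinearMap.mem_ker, AlgHom.toLinearMap_apply, map_mul] at hx ⊢
  simp only [hx, mul_zero, zero_mul, and_self]

end TwoSidedMaps

section Density

variable {A : Type*} [Ring A] [Algebra K A]

attribute [local instance] instModuleTensorProductMop

variable (K A) in
theorem isSimpleModule_tensorProduct_mulOpposite [IsSimpleRing A] :
    IsSimpleModule (A ⊗[K] Aᵐᵒᵖ) A := by
  refine (isSimpleModule_iff ..).2 { eq_bot_or_eq_top := fun N => ?_ }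
  have mul_mem (a b : A) {x : A} (hx : x ∈ N) : a * x * b ∈ N := by
    rw [← MulOpposite.unop_op b, ← AlgHom.mulLeftRight_apply K]
    exact N.smul_mem (a ⊗ₜ[K] MulOpposite.op b) hx
  let I : Ideal A :=
    { N.toAddSubmonoid with
      smul_mem' := fun a x hx => by simpa only [mul_one] using! mul_mem a 1 hx }
  have hI : I.IsTwoSided := ⟨fun b hx => by simpa only [one_mul] using! mul_mem 1 b hx⟩
  refine ((isSimpleRing_iff_isTwoSided_imp.1 ‹_›).2 I hI).imp (fun h => ?_) fun h => ?_
  · exact SetLike.ext fun x => (SetLike.ext_iff.1 h x :)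
  · exact SetLike.ext fun x => (SetLike.ext_iff.1 h x :)

theorem exists_forall_eq_smul_of_bimodule_end [Algebra.IsCentral K A]
    (φ : Module.End (A ⊗[K] Aᵐᵒᵖ) A) : ∃ c : K, ∀ x, φ x = c • x := by
  have map_mul_mul (a b x : A) : φ (a * x * b) = a * φ x * b := by
    rw [← MulOpposite.unop_op b, ← AlgHom.mulLeftRight_apply K, ← AlgHom.mulLeftRight_apply K]
    exact φ.map_smul (a ⊗ₜ[K] MulOpposite.op b) x
  have left (a : A) : φ a = a * φ 1 := by simpa using map_mul_mul a 1 1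
  have right (a : A) : φ a = φ 1 * a := by simpa using map_mul_mul 1 a 1
  have hcenter : φ 1 ∈ Subalgebra.center K A :=
    Subalgebra.mem_center_iff.2 fun a => (left a).symm.trans (right a)
  obtain ⟨c, hc⟩ := Algebra.mem_bot.1 (Algebra.IsCentral.out hcenter)
  exact ⟨c, fun x => by rw [right, ← hc, Algebra.smul_def]⟩

theorem exists_mulLeftRight_eqOn [IsSimpleRing A] [Algebra.IsCentral K A] (g : Module.End K A)
    (s : Finset A) : ∃ t, Set.EqOn (AlgHom.mulLeftRight K A t) g s := by
  have := isSimpleModule_tensorProduct_mulOpposite K A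
  let g' : Module.End (Module.End (A ⊗[K] Aᵐᵒᵖ) A) A :=
    { g with
      map_smul' := fun φ x => by
        obtain ⟨c, hc⟩ := exists_forall_eq_smul_of_bimodule_end φ
        change g (φ x) = φ (g x)
        rw [hc, hc, map_smul] }
  obtain ⟨t, ht⟩ := jacobson_density g' s
  exact ⟨t, fun a ha => (ht a ha).symm⟩

end Density

section Contraction

variable {V W X : Type*} [AddCommGroup V] [Module K V] [AddCommGroup W] [Module K W]
  [AddCommGroup X] [Module K X]

/-- The contraction `f ⊗ id : V ⊗ W → K ⊗ W ≃ W` by a linear form `f` on `V`. The elements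
`contractDual f m` are the coefficients of `m`. -/
noncomputable def contractDual (f : V →ₗ[K] K) : V ⊗[K] W →ₗ[K] W :=
  (TensorProduct.lid K W).toLinearMap ∘ₗ f.rTensor W

theorem contractDual_tmul (f : V →ₗ[K] K) (v : V) (w : W) :
    contractDual f (v ⊗ₜ[K] w) = f v • w :=
  rfl

theorem contractDual_add (f g : V →ₗ[K] K) :
    contractDual (W := W) (f + g) = contractDual f + contractDual g := by
  simp only [contractDual, LinearMap.rTensor_add, LinearMap.comp_add]

theorem contractDual_map_id (f : V →ₗ[K] K) (g : W →ₗ[K] X) (m : V ⊗[K] W) :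
    contractDual f (TensorProduct.map LinearMap.id g m) = g (contractDual f m) := by
  induction m with
  | zero => simp only [map_zero]
  | tmul v w => simp only [TensorProduct.map_tmul, contractDual_tmul, map_smul, LinearMap.id_apply]
  | add m n hm hn => simp only [map_add, hm, hn]

theorem one_tmul_contractDual {A : Type*} [Ring A] [Algebra K A] (f : A →ₗ[K] K) (m : A ⊗[K] W) :
    1 ⊗ₜ[K] contractDual f m = (f.smulRight (1 : A)).rTensor W m := by
  induction m with
  | zero => simp only [map_zero, TensorProduct.tmul_zero]
  | tmul v w =>
    rw [contractDual_tmul, LinearMap.rTensor_tmul, LinearMap.smulRight_apply,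
      TensorProduct.smul_tmul]
  | add m n hm hn => simp only [map_add, TensorProduct.tmul_add, hm, hn]

theorem eq_sum_basis_tmul_contractDual {ι : Type*} (b : Module.Basis ι K V) (m : V ⊗[K] W) :
    ∃ s : Finset ι, m = ∑ i ∈ s, b i ⊗ₜ[K] contractDual (b.coord i) m := by
  classical
  let e := TensorProduct.equivFinsuppOfBasisLeft (N := W) b
  refine ⟨(e m).support, ?_⟩
  conv_lhs => rw [← e.symm_apply_apply m, TensorProduct.equivFinsuppOfBasisLeft_symm_apply]
  exact Finset.sum_congr rfl fun i _ => by
    rw [TensorProduct.equivFinsuppOfBasisLeft_apply]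
    rfl

theorem mem_range_map_id_subtype_iff {U : Submodule K W} {m : V ⊗[K] W} :
    m ∈ LinearMap.range (TensorProduct.map (LinearMap.id : V →ₗ[K] V) U.subtype) ↔
      ∀ f, contractDual f m ∈ U := by
  constructor
  · rintro ⟨n, rfl⟩ f
    rw [contractDual_map_id]
    exact (contractDual f n).2
  · intro h
    obtain ⟨s, hs⟩ := eq_sum_basis_tmul_contractDual (Module.Basis.ofVectorSpace K V) m
    rw [hs]
    exact sum_mem fun i _ => ⟨_ ⊗ₜ[K] ⟨_, h _⟩, rfl⟩

theorem eq_zero_iff_contractDual_eq_zero {m : V ⊗[K] W} :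
    m = 0 ↔ ∀ f, contractDual f m = 0 := by
  refine ⟨fun h f => h ▸ map_zero _, fun h => ?_⟩
  obtain ⟨s, hs⟩ := eq_sum_basis_tmul_contractDual (Module.Basis.ofVectorSpace K V) m
  rw [hs]
  exact Finset.sum_eq_zero fun i _ => by rw [h, TensorProduct.tmul_zero]

end Contraction

section SuperTensorGrading

variable {V W : Type*} [AddCommGroup V] [Module K V] [AddCommGroup W] [Module K W]
  {𝒱 : ZMod 2 → Submodule K V} {𝒲 : ZMod 2 → Submodule K W}

theorem zmodTwo_eq_or_eq_add_one (i j : ZMod 2) : i = j ∨ i = j + 1 := by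
  decide +revert

theorem superTensorGrading_le_s6 {k : ZMod 2} {U : Submodule K (V ⊗[K] W)}
    (h : ∀ i, ∀ v ∈ 𝒱 i, ∀ w ∈ 𝒲 (k + i), v ⊗ₜ[K] w ∈ U) :
    superTensorGrading K 𝒱 𝒲 k ≤ U := by
  rw [superTensorGrading, TensorProduct.range_map_eq_span_tmul,
    TensorProduct.range_map_eq_span_tmul, sup_le_iff, Submodule.span_le, Submodule.span_le]
  constructor
  · rintro _ ⟨v, w, rfl⟩
    exact h 0 v v.2 w ((add_zero k).symm ▸ w.2)
  · rintro _ ⟨v, w, rfl⟩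
    exact h 1 v v.2 w w.2

theorem tmul_mem_superTensorGrading_s6 {i k : ZMod 2} {v : V} {w : W} (hv : v ∈ 𝒱 i)
    (hw : w ∈ 𝒲 (k + i)) : v ⊗ₜ[K] w ∈ superTensorGrading K 𝒱 𝒲 k := by
  obtain rfl | rfl := zmodTwo_eq_or_eq_add_one i 0
  · exact Submodule.mem_sup_left ⟨⟨v, hv⟩ ⊗ₜ[K] ⟨w, add_zero k ▸ hw⟩, rfl⟩
  · exact Submodule.mem_sup_right ⟨⟨v, hv⟩ ⊗ₜ[K] ⟨w, hw⟩, rfl⟩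

theorem contractDual_mem_of_mem_superTensorGrading {j k : ZMod 2} {f : V →ₗ[K] K}
    (hf : ∀ v ∈ 𝒱 (j + 1), f v = 0) {m : V ⊗[K] W} (hm : m ∈ superTensorGrading K 𝒱 𝒲 k) :
    contractDual f m ∈ 𝒲 (k + j) := by
  refine superTensorGrading_le_s6 (U := (𝒲 (k + j)).comap (contractDual f)) ?_ hm
  intro i v hv w hw
  rw [Submodule.mem_comap, contractDual_tmul]
  obtain rfl | rfl := zmodTwo_eq_or_eq_add_one i j
  · exact Submodule.smul_mem _ _ hw
  · rw [hf v hv, zero_smul]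
    exact zero_mem _

theorem IsGradedHom.tensorMap_id {A X Y : Type*} [Ring A] [Algebra K A] [Ring X] [Algebra K X]
    [Ring Y] [Algebra K Y] (𝒜 : ZMod 2 → Submodule K A) {𝒳 : ZMod 2 → Submodule K X}
    {𝒴 : ZMod 2 → Submodule K Y} {ζ : X →ₐ[K] Y} (hζ : IsGradedHom K 𝒳 𝒴 ζ) :
    IsGradedHom K (superTensorGrading K 𝒜 𝒳) (superTensorGrading K 𝒜 𝒴)
      (Algebra.TensorProduct.map (AlgHom.id K A) ζ) := fun k =>
  superTensorGrading_le_s6 (U := (superTensorGrading K 𝒜 𝒴 k).comap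
    (Algebra.TensorProduct.map (AlgHom.id K A) ζ).toLinearMap) fun _ _ ha x hx =>
      tmul_mem_superTensorGrading_s6 ha (hζ _ x hx)

theorem IsGradedHom.comp {B C D : Type*} [Ring B] [Algebra K B] [Ring C] [Algebra K C] [Ring D]
    [Algebra K D] {ℬ : ZMod 2 → Submodule K B} {𝒞 : ZMod 2 → Submodule K C}
    {𝒟 : ZMod 2 → Submodule K D} {ψ : C →ₐ[K] D} {φ : B →ₐ[K] C} (hψ : IsGradedHom K 𝒞 𝒟 ψ)
    (hφ : IsGradedHom K ℬ 𝒞 φ) : IsGradedHom K ℬ 𝒟 (ψ.comp φ) :=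
  fun k b hb => hψ k _ (hφ k b hb)

end SuperTensorGrading

section Quotient

variable {B : Type u} {C : Type*} [Ring B] [Algebra K B] [Ring C] [Algebra K C]
  {ℬ : ZMod 2 → Submodule K B} {𝒞 : ZMod 2 → Submodule K C} {I : Submodule K B}

theorem exists_comp_mkAlgHom_eq (φ : B →ₐ[K] C) (hφ : I ≤ LinearMap.ker φ.toLinearMap) :
    ∃ φ' : RingQuot (idealRel K I) →ₐ[K] C, φ'.comp (RingQuot.mkAlgHom K (idealRel K I)) = φ :=
  ⟨RingQuot.liftAlgHom K ⟨φ, fun _ _ h => sub_eq_zero.1 (map_sub φ _ _ ▸ hφ h)⟩,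
    AlgHom.ext fun _ => RingQuot.liftAlgHom_mkAlgHom_apply ..⟩

theorem le_ker_mkAlgHom_idealRel (I : Submodule K B) :
    I ≤ LinearMap.ker (RingQuot.mkAlgHom K (idealRel K I)).toLinearMap := by
  intro x hx
  have hrel : idealRel K I x 0 := by rwa [idealRel, sub_zero]
  exact (RingQuot.mkAlgHom_rel K hrel).trans (map_zero _)

theorem ker_mkAlgHom_idealRel (hI : IsTwoSidedSubmodule K I) :
    LinearMap.ker (RingQuot.mkAlgHom K (idealRel K I)).toLinearMap = I := by
  let N : Ideal B := { I.toAddSubmonoid with smul_mem' := fun a x hx => (hI a x hx).1 }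
  have : N.IsTwoSided := ⟨fun b hx => (hI b _ hx).2⟩
  refine le_antisymm (fun x hx => ?_) (le_ker_mkAlgHom_idealRel I)
  obtain ⟨φ, hφ⟩ := exists_comp_mkAlgHom_eq (I := I) (Ideal.Quotient.mkₐ K N) fun y hy =>
    Ideal.Quotient.eq_zero_iff_mem.2 hy
  have hx0 : Ideal.Quotient.mkₐ K N x = 0 := by
    rw [← hφ, AlgHom.comp_apply]
    exact (congrArg φ hx).trans (map_zero φ)
  exact Ideal.Quotient.eq_zero_iff_mem.1 hx0

theorem isGradedHom_quotGrading_iff {φ : RingQuot (idealRel K I) →ₐ[K] C} :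
    IsGradedHom K (quotGrading K ℬ I) 𝒞 φ ↔
      IsGradedHom K ℬ 𝒞 (φ.comp (RingQuot.mkAlgHom K (idealRel K I))) :=
  forall_congr' fun _ => Set.forall_mem_image

theorem isGradedHom_mkAlgHom_idealRel :
    IsGradedHom K ℬ (quotGrading K ℬ I) (RingQuot.mkAlgHom K (idealRel K I)) :=
  fun _ _ => Submodule.mem_map_of_mem

theorem IsZ2Grading.quotGrading (hℬ : IsZ2Grading K ℬ) (hI : IsTwoSidedSubmodule K I)
    (hIg : IsGradedSubmodule K ℬ I) : IsZ2Grading K (quotGrading K ℬ I) := by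
  refine ⟨⟨?_, ?_⟩, ⟨1, hℬ.2.1, map_one (RingQuot.mkAlgHom K (idealRel K I))⟩, ?_⟩
  · rw [_root_.quotGrading, _root_.quotGrading, ← Submodule.map_sup, hℬ.1.1, Submodule.map_top,
      LinearMap.range_eq_top]
    exact RingQuot.mkAlgHom_surjective K (idealRel K I)
  · rw [← disjoint_iff, Submodule.disjoint_def]
    rintro _ ⟨b, hb, rfl⟩ ⟨c, hc, hcb⟩
    have hsub : b + -c ∈ I := by
      rw [← ker_mkAlgHom_idealRel hI, LinearMap.mem_ker, ← sub_eq_add_neg, map_sub, hcb, sub_self]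
    have hbI : b ∈ I := (hℬ.1.isGradedSubmodule_iff.1 hIg b hb (-c) (neg_mem hc) hsub).1
    rwa [← ker_mkAlgHom_idealRel hI] at hbI
  · rintro i j _ ⟨b, hb, rfl⟩ _ ⟨c, hc, rfl⟩
    exact ⟨b * c, hℬ.2.2 i j b hb c hc, map_mul (RingQuot.mkAlgHom K (idealRel K I)) b c⟩

theorem IsSupercommutative.quotGrading (hℬ : IsSupercommutative K ℬ) :
    IsSupercommutative K (quotGrading K ℬ I) := by
  rintro i j _ ⟨b, hb, rfl⟩ _ ⟨c, hc, rfl⟩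
  simp only [AlgHom.toLinearMap_apply, ← map_mul, ← map_smul, hℬ i j b hb c hc]

/-- The quotient supercommutative algebra `Ξ / J`, realized as a `RingQuot`. -/
noncomputable abbrev SuperAlg.quotient (Ξ : SuperAlg K) {J : Submodule K Ξ.carrier}
    (hJ : IsTwoSidedSubmodule K J) (hJg : IsGradedSubmodule K Ξ.grading J) : SuperAlg K :=
  ⟨RingQuot (idealRel K J), quotGrading K Ξ.grading J, Ξ.isGrading.quotGrading hJ hJg,
    Ξ.isSupercomm.quotGrading⟩

end Quotient

section TensorIdeal

variable {A X Y : Type u} [Ring A] [Algebra K A] [Ring X] [Algebra K X] [Ring Y] [Algebra K Y]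

theorem mem_tensorIdeal_iff {J : Submodule K X} {m : A ⊗[K] X} :
    m ∈ tensorIdeal K J ↔ ∀ f, contractDual f m ∈ J :=
  mem_range_map_id_subtype_iff

theorem mapsIntoTensorSub_iff {B : Type u} [Ring B] [Algebra K B] {ρ : B →ₐ[K] A ⊗[K] X}
    {S : Subalgebra K X} : MapsIntoTensorSub K ρ S ↔ ∀ b f, contractDual f (ρ b) ∈ S :=
  forall_congr' fun _ => mem_range_map_id_subtype_iff

theorem contractDual_tensorMap_id (f : A →ₗ[K] K) (ζ : X →ₐ[K] Y) (m : A ⊗[K] X) :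
    contractDual f (Algebra.TensorProduct.map (AlgHom.id K A) ζ m) = ζ (contractDual f m) :=
  contractDual_map_id f ζ.toLinearMap m

variable (A) in
theorem ker_tensorMap_id (ζ : X →ₐ[K] Y) :
    LinearMap.ker (Algebra.TensorProduct.map (AlgHom.id K A) ζ).toLinearMap =
      tensorIdeal K (LinearMap.ker ζ.toLinearMap) := by
  ext m
  rw [mem_tensorIdeal_iff, LinearMap.mem_ker, AlgHom.toLinearMap_apply,
    eq_zero_iff_contractDual_eq_zero]
  simp only [contractDual_tensorMap_id, LinearMap.mem_ker, AlgHom.toLinearMap_apply]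

theorem IsTwoSidedSubmodule.tensorIdeal {J : Submodule K X} (hJ : IsTwoSidedSubmodule K J) :
    IsTwoSidedSubmodule K (tensorIdeal (A := A) K J) := by
  rw [← ker_mkAlgHom_idealRel hJ, ← ker_tensorMap_id]
  exact isTwoSidedSubmodule_ker _

/-- The two-sided ideal generated by the coefficients of the elements of `S`. -/
noncomputable def coefficientIdeal (S : Set (A ⊗[K] X)) : Submodule K X :=
  twoSidedSpan K {x | ∃ f : A →ₗ[K] K, ∃ m ∈ S, contractDual f m = x}

theorem isTwoSidedSubmodule_coefficientIdeal (S : Set (A ⊗[K] X)) :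
    IsTwoSidedSubmodule K (coefficientIdeal S) :=
  isTwoSidedSubmodule_twoSidedSpan _

theorem coefficientIdeal_le_iff {S : Set (A ⊗[K] X)} {J : Submodule K X}
    (hJ : IsTwoSidedSubmodule K J) :
    coefficientIdeal S ≤ J ↔ S ⊆ (tensorIdeal K J : Submodule K (A ⊗[K] X)) := by
  constructor
  · intro h m hm
    exact mem_tensorIdeal_iff.2 fun f => h (subset_twoSidedSpan _ ⟨f, m, hm, rfl⟩)
  · intro h
    refine twoSidedSpan_le hJ ?_
    rintro _ ⟨f, m, hm, rfl⟩
    exact mem_tensorIdeal_iff.1 (h hm) f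

theorem coefficientIdeal_le_ker_iff {S : Set (A ⊗[K] X)} {ζ : X →ₐ[K] Y} :
    coefficientIdeal S ≤ LinearMap.ker ζ.toLinearMap ↔
      ∀ m ∈ S, Algebra.TensorProduct.map (AlgHom.id K A) ζ m = 0 := by
  rw [coefficientIdeal_le_iff (isTwoSidedSubmodule_ker ζ), ← ker_tensorMap_id]
  rfl

theorem exists_tensor_quotient_lift {B : Type u} [Ring B] [Algebra K B] (ρ : B →ₐ[K] A ⊗[K] X)
    {I : Submodule K B} {J : Submodule K X} (hJ : IsTwoSidedSubmodule K J)
    (hJρ : coefficientIdeal (ρ '' I) ≤ J) :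
    ∃ ρ' : RingQuot (idealRel K I) →ₐ[K] A ⊗[K] RingQuot (idealRel K J),
      ρ'.comp (RingQuot.mkAlgHom K (idealRel K I)) =
        (Algebra.TensorProduct.map (AlgHom.id K A) (RingQuot.mkAlgHom K (idealRel K J))).comp ρ :=
  exists_comp_mkAlgHom_eq _ fun b hb =>
    coefficientIdeal_le_ker_iff.1 (hJρ.trans (ker_mkAlgHom_idealRel hJ).ge) _ ⟨b, hb, rfl⟩

theorem twoSidedSpan_le_tensorIdeal_coefficientIdeal (S : Set (A ⊗[K] X)) :
    twoSidedSpan K S ≤ tensorIdeal K (coefficientIdeal S) :=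
  have hS := isTwoSidedSubmodule_coefficientIdeal S
  twoSidedSpan_le hS.tensorIdeal ((coefficientIdeal_le_iff hS).1 le_rfl)

theorem isGradedSubmodule_coefficientIdeal_image {B : Type*} [Ring B] [Algebra K B]
    {ℬ : ZMod 2 → Submodule K B} {𝒜 : ZMod 2 → Submodule K A} (h𝒜 : IsZ2Decomp K 𝒜)
    {𝒳 : ZMod 2 → Submodule K X} (h𝒳 : IsZ2Grading K 𝒳) {ρ : B →ₐ[K] A ⊗[K] X}
    (hρ : IsGradedHom K ℬ (superTensorGrading K 𝒜 𝒳) ρ) {I : Submodule K B}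
    (hI : IsGradedSubmodule K ℬ I) : IsGradedSubmodule K 𝒳 (coefficientIdeal (ρ '' I)) := by
  refine isGradedSubmodule_twoSidedSpan h𝒳 ?_
  rintro _ ⟨f, _, ⟨b, hb, rfl⟩, rfl⟩
  have homogeneous_mem {j k : ZMod 2} {g : A →ₗ[K] K} (hg : ∀ a ∈ 𝒜 (j + 1), g a = 0)
      {c : B} (hc : c ∈ I ⊓ ℬ k) :
      contractDual g (ρ c) ∈ gradedCore 𝒳 (coefficientIdeal (ρ '' I)) :=
    inf_le_gradedCore _ _ ⟨subset_twoSidedSpan _ ⟨g, ρ c, ⟨c, hc.1, rfl⟩, rfl⟩,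
      contractDual_mem_of_mem_superTensorGrading hg (hρ k c hc.2)⟩
  obtain ⟨f₀, f₁, hf₀, hf₁, rfl⟩ := h𝒜.exists_dual_add_eq f
  rw [SetLike.mem_coe, hI] at hb
  obtain ⟨b₀, hb₀, b₁, hb₁, rfl⟩ := Submodule.mem_sup.1 hb
  rw [contractDual_add, LinearMap.add_apply, map_add, map_add, map_add]
  exact add_mem (add_mem (homogeneous_mem (j := 0) hf₀ hb₀) (homogeneous_mem (j := 0) hf₀ hb₁))
    (add_mem (homogeneous_mem (j := 1) hf₁ hb₀) (homogeneous_mem (j := 1) hf₁ hb₁))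

end TensorIdeal

section IdealsOfTensor

variable {A X : Type u} [Ring A] [Algebra K A] [Ring X] [Algebra K X]

theorem rTensor_mulLeftRight_tmul (a : A) (b : Aᵐᵒᵖ) (m : A ⊗[K] X) :
    (AlgHom.mulLeftRight K A (a ⊗ₜ[K] b)).rTensor X m = a ⊗ₜ[K] 1 * m * b.unop ⊗ₜ[K] 1 := by
  induction m with
  | zero => simp only [map_zero, mul_zero, zero_mul]
  | tmul c x =>
    simp only [LinearMap.rTensor_tmul, AlgHom.mulLeftRight_apply,
      Algebra.TensorProduct.tmul_mul_tmul, one_mul, mul_one]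
  | add m n hm hn => simp only [map_add, mul_add, add_mul, hm, hn]

theorem IsTwoSidedSubmodule.rTensor_mulLeftRight_mem {M : Submodule K (A ⊗[K] X)}
    (hM : IsTwoSidedSubmodule K M) (t : A ⊗[K] Aᵐᵒᵖ) {m : A ⊗[K] X} (hm : m ∈ M) :
    (AlgHom.mulLeftRight K A t).rTensor X m ∈ M := by
  induction t with
  | zero => simp only [map_zero, LinearMap.rTensor_zero, LinearMap.zero_apply, zero_mem]
  | tmul a b => exact rTensor_mulLeftRight_tmul a b m ▸ (hM _ _ (hM _ _ hm).1).2
  | add t t' ht ht' =>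
    rw [map_add, LinearMap.rTensor_add, LinearMap.add_apply]
    exact add_mem ht ht'

theorem IsTwoSidedSubmodule.rTensor_mem [IsSimpleRing A] [Algebra.IsCentral K A]
    {M : Submodule K (A ⊗[K] X)} (hM : IsTwoSidedSubmodule K M) (g : Module.End K A)
    {m : A ⊗[K] X} (hm : m ∈ M) : g.rTensor X m ∈ M := by
  obtain ⟨S, hS⟩ := TensorProduct.exists_finsupp_left m
  obtain ⟨t, ht⟩ := exists_mulLeftRight_eqOn g S.support
  have hg : g.rTensor X m = (AlgHom.mulLeftRight K A t).rTensor X m := by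
    simp only [hS, Finsupp.sum, map_sum, LinearMap.rTensor_tmul]
    exact Finset.sum_congr rfl fun a ha => by rw [ht ha]
  exact hg ▸ hM.rTensor_mulLeftRight_mem t hm

theorem tensorIdeal_coefficientIdeal_le_twoSidedSpan [IsSimpleRing A] [Algebra.IsCentral K A]
    (S : Set (A ⊗[K] X)) : tensorIdeal K (coefficientIdeal S) ≤ twoSidedSpan K S := by
  have hspan := isTwoSidedSubmodule_twoSidedSpan (K := K) S
  have hcoeff : coefficientIdeal S ≤ (twoSidedSpan K S).comap
      (Algebra.TensorProduct.includeRight : X →ₐ[K] A ⊗[K] X).toLinearMap := by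
    refine twoSidedSpan_le (hspan.comap _) ?_
    rintro _ ⟨f, m, hm, rfl⟩
    exact (one_tmul_contractDual f m ▸ hspan.rTensor_mem _ (subset_twoSidedSpan S hm) :)
  rw [tensorIdeal, TensorProduct.range_map_eq_span_tmul, Submodule.span_le]
  rintro _ ⟨a, x, rfl⟩
  have hax : a ⊗ₜ[K] (x : X) = a ⊗ₜ[K] 1 * 1 ⊗ₜ[K] (x : X) := by
    rw [Algebra.TensorProduct.tmul_mul_tmul, mul_one, one_mul]
  exact hax ▸ (hspan _ _ (hcoeff x.2)).1

theorem IsGradedSimple.twoSidedSpan_eq_tensorIdeal [Algebra.IsCentral K A]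
    {𝒜 : ZMod 2 → Submodule K A} (hs : IsGradedSimple K 𝒜) (h𝒜 : IsZ2Grading K 𝒜)
    (S : Set (A ⊗[K] X)) : twoSidedSpan K S = tensorIdeal K (coefficientIdeal S) := by
  refine le_antisymm (twoSidedSpan_le_tensorIdeal_coefficientIdeal S) ?_
  cases subsingleton_or_nontrivial A
  · exact (Subsingleton.elim _ _).le
  · have := hs.isSimpleRing h𝒜
    exact tensorIdeal_coefficientIdeal_le_twoSidedSpan S

end IdealsOfTensor

section UniversalSupermap

variable {A : Type u} [Ring A] [Algebra K A] {𝒜 : ZMod 2 → Submodule K A}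
  {B : Type u} [Ring B] [Algebra K B] {ℬ : ZMod 2 → Submodule K B}
  {Ξ : SuperAlg K} {ρ : B →ₐ[K] A ⊗[K] Ξ.carrier} {I : Submodule K B}

theorem IsUniversalSupermap.eq_top_of_mapsIntoTensorSub_quotient
    (hU : IsUniversalSupermap K 𝒜 ℬ Ξ ρ) {J : Submodule K Ξ.carrier}
    (hJ : IsTwoSidedSubmodule K J) (hJg : IsGradedSubmodule K Ξ.grading J)
    {S : Subalgebra K (RingQuot (idealRel K J))}
    (hSg : IsGradedSubalgebra K (quotGrading K Ξ.grading J) S)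
    (hS : MapsIntoTensorSub K ((Algebra.TensorProduct.map (AlgHom.id K A)
      (RingQuot.mkAlgHom K (idealRel K J))).comp ρ) S) : S = ⊤ := by
  have hcomap : S.comap (RingQuot.mkAlgHom K (idealRel K J)) = ⊤ := by
    refine hU.2.1 _ ?_ (mapsIntoTensorSub_iff.2 fun b f => ?_)
    · exact IsGradedSubmodule.comap Ξ.isGrading.1 (Ξ.isGrading.quotGrading hJ hJg).1
        (f := (RingQuot.mkAlgHom K (idealRel K J)).toLinearMap) isGradedHom_mkAlgHom_idealRel hSg
    · rw [Subalgebra.mem_comap, ← contractDual_tensorMap_id]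
      exact mapsIntoTensorSub_iff.1 hS b f
  refine eq_top_iff.2 fun y _ => ?_
  obtain ⟨x, rfl⟩ := RingQuot.mkAlgHom_surjective K (idealRel K J) y
  exact (hcomap ▸ Algebra.mem_top : x ∈ S.comap (RingQuot.mkAlgHom K (idealRel K J)))

theorem IsUniversalSupermap.exists_factorization_quotient (hU : IsUniversalSupermap K 𝒜 ℬ Ξ ρ)
    {J : Submodule K Ξ.carrier} (hJ : J ≤ coefficientIdeal (ρ '' I))
    {ρ' : RingQuot (idealRel K I) →ₐ[K] A ⊗[K] RingQuot (idealRel K J)}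
    (hρ' : ρ'.comp (RingQuot.mkAlgHom K (idealRel K I)) =
      (Algebra.TensorProduct.map (AlgHom.id K A) (RingQuot.mkAlgHom K (idealRel K J))).comp ρ)
    (F : SuperAlg K) (κ : RingQuot (idealRel K I) →ₐ[K] A ⊗[K] F.carrier)
    (hκ : IsGradedHom K (quotGrading K ℬ I) (superTensorGrading K 𝒜 F.grading) κ) :
    ∃ ζ : RingQuot (idealRel K J) →ₐ[K] F.carrier,
      IsGradedHom K (quotGrading K Ξ.grading J) F.grading ζ ∧
        (Algebra.TensorProduct.map (AlgHom.id K A) ζ).comp ρ' = κ := by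
  obtain ⟨ζ, hζ, hζρ⟩ := hU.2.2 F _ (isGradedHom_quotGrading_iff.1 hκ)
  have hker : coefficientIdeal (ρ '' I) ≤ LinearMap.ker ζ.toLinearMap := by
    refine coefficientIdeal_le_ker_iff.2 ?_
    rintro _ ⟨b, hb, rfl⟩
    have hmk : RingQuot.mkAlgHom K (idealRel K I) b = 0 := le_ker_mkAlgHom_idealRel I hb
    rw [← AlgHom.comp_apply, hζρ, AlgHom.comp_apply, hmk, map_zero]
  obtain ⟨ζ', rfl⟩ := exists_comp_mkAlgHom_eq ζ (hJ.trans hker)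
  refine ⟨ζ', isGradedHom_quotGrading_iff.2 hζ, RingQuot.ringQuot_ext' _ _ _ ?_⟩
  rw [AlgHom.comp_assoc, hρ', ← AlgHom.comp_assoc, ← Algebra.TensorProduct.map_id_comp, hζρ]

theorem IsUniversalSupermap.quotient (hU : IsUniversalSupermap K 𝒜 ℬ Ξ ρ)
    {J : Submodule K Ξ.carrier} (hJ : IsTwoSidedSubmodule K J)
    (hJg : IsGradedSubmodule K Ξ.grading J) (hJρ : J ≤ coefficientIdeal (ρ '' I))
    {ρ' : RingQuot (idealRel K I) →ₐ[K] A ⊗[K] RingQuot (idealRel K J)}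
    (hρ' : ρ'.comp (RingQuot.mkAlgHom K (idealRel K I)) =
      (Algebra.TensorProduct.map (AlgHom.id K A) (RingQuot.mkAlgHom K (idealRel K J))).comp ρ) :
    IsUniversalSupermap K 𝒜 (quotGrading K ℬ I) (Ξ.quotient hJ hJg) ρ' := by
  refine ⟨isGradedHom_quotGrading_iff.2 ?_, fun S hSg hS => ?_,
    hU.exists_factorization_quotient hJρ hρ'⟩
  · rw [hρ']
    exact (isGradedHom_mkAlgHom_idealRel.tensorMap_id 𝒜).comp hU.1
  · exact hU.eq_top_of_mapsIntoTensorSub_quotient hJ hJg hSg (hρ' ▸ fun b => hS _)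

end UniversalSupermap

theorem universal_supermap_quotient_general
    {A : Type u} [Ring A] [Algebra K A]
    (𝒜 : ZMod 2 → Submodule K A) (h𝒜 : IsZ2Grading K 𝒜)
    (hsimple : IsGradedSimple K 𝒜)
    (hcentral : Subalgebra.center K A = ⊥)
    {B : Type u} [Ring B] [Algebra K B]
    (ℬ : ZMod 2 → Submodule K B) (hℬ : IsZ2Grading K ℬ)
    (Ξ : SuperAlg K) (ρ : B →ₐ[K] A ⊗[K] Ξ.carrier)
    (hU : IsUniversalSupermap K 𝒜 ℬ Ξ ρ)
    (I : Submodule K B) (hI2 : IsTwoSidedSubmodule K I)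
    (hIgr : IsGradedSubmodule K ℬ I) :
    IsZ2Grading K (quotGrading K ℬ I) ∧
    ∃ J : Submodule K Ξ.carrier,
      IsTwoSidedSubmodule K J ∧ IsGradedSubmodule K Ξ.grading J ∧
      twoSidedSpan K (⇑ρ '' (I : Set B)) = tensorIdeal K J ∧
      ∃ (hgr : IsZ2Grading K (quotGrading K Ξ.grading J))
        (hsc : IsSupercommutative K (quotGrading K Ξ.grading J))
        (ρ' : RingQuot (idealRel K I) →ₐ[K] A ⊗[K] RingQuot (idealRel K J)),
        ρ'.comp (RingQuot.mkAlgHom K (idealRel K I)) =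
          (Algebra.TensorProduct.map (AlgHom.id K A)
            (RingQuot.mkAlgHom K (idealRel K J))).comp ρ ∧
        IsUniversalSupermap K 𝒜 (quotGrading K ℬ I)
          (⟨RingQuot (idealRel K J), quotGrading K Ξ.grading J, hgr, hsc⟩ : SuperAlg K) ρ' := by
  have : Algebra.IsCentral K A := ⟨hcentral.le⟩
  have hJ := isTwoSidedSubmodule_coefficientIdeal (ρ '' I)
  have hJgr := isGradedSubmodule_coefficientIdeal_image h𝒜.1 Ξ.isGrading hU.1 hIgr
  obtain ⟨ρ', hρ'⟩ := exists_tensor_quotient_lift ρ hJ le_rfl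
  exact ⟨hℬ.quotGrading hI2 hIgr, _, hJ, hJgr, hsimple.twoSidedSpan_eq_tensorIdeal h𝒜 _, _, _, ρ',
    hρ', hU.quotient hJ hJgr le_rfl hρ'⟩

end QuotientSupermap

/-- Universal supermaps pass to quotients: if `(Ξ, ρ)` is an `A`-universal
supermap for `B` and `I` is a graded two-sided ideal of `B`, then there are a graded ideal
`J` of `Ξ` with `A ⊗ J` equal to the two-sided ideal of `A ⊗ Ξ` generated by `ρ(I)`, and a
graded homomorphism `ρ' : B/I → A ⊗ (Ξ/J)` with `ρ' ∘ p_I = (id_A ⊗ p_J) ∘ ρ` such that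
`(Ξ/J, ρ')` is an `A`-universal supermap for `B/I`. -/
theorem universal_supermap_quotient
    {K : Type u} [Field K] [CharZero K]
    {A : Type u} [Ring A] [Algebra K A] [FiniteDimensional K A]
    (𝒜 : ZMod 2 → Submodule K A) (h𝒜 : IsZ2Grading K 𝒜)
    (hsimple : IsGradedSimple K 𝒜)
    (hcentral : Subalgebra.center K A = ⊥)
    {B : Type u} [Ring B] [Algebra K B]
    (ℬ : ZMod 2 → Submodule K B) (hℬ : IsZ2Grading K ℬ)
    (Ξ : SuperAlg K) (ρ : B →ₐ[K] A ⊗[K] Ξ.carrier)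
    (hU : IsUniversalSupermap K 𝒜 ℬ Ξ ρ)
    (I : Submodule K B) (hI2 : IsTwoSidedSubmodule K I)
    (hIgr : IsGradedSubmodule K ℬ I) :
    ∃ J : Submodule K Ξ.carrier,
      IsTwoSidedSubmodule K J ∧ IsGradedSubmodule K Ξ.grading J ∧
      twoSidedSpan K (⇑ρ '' (I : Set B)) = tensorIdeal K J ∧
      ∃ (hgr : IsZ2Grading K (quotGrading K Ξ.grading J))
        (hsc : IsSupercommutative K (quotGrading K Ξ.grading J))
        (ρ' : RingQuot (idealRel K I) →ₐ[K] A ⊗[K] RingQuot (idealRel K J)),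
        ρ'.comp (RingQuot.mkAlgHom K (idealRel K I)) =
          (Algebra.TensorProduct.map (AlgHom.id K A)
            (RingQuot.mkAlgHom K (idealRel K J))).comp ρ ∧
        IsUniversalSupermap K 𝒜 (quotGrading K ℬ I)
          (⟨RingQuot (idealRel K J), quotGrading K Ξ.grading J, hgr, hsc⟩ : SuperAlg K) ρ' :=
  (universal_supermap_quotient_general 𝒜 h𝒜 hsimple hcentral ℬ hℬ Ξ ρ hU I hI2 hIgr).2
end
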